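/- Let p be a prime, let η ∈ (0,1), let A ⊆ ℤ/pℤ be a subset with |A| ≥ η·p > 0 and |2A| = 2|A| + r < p, and let α = −5/4 + (1/4)·√(9 + 8·η·p·sin(π/p)/sin(π·η/3)). Suppose |2A| ≤ (2+α)|A| − 3 and |A| ≤ (p − r)/3. Then there exist arithmetic progressions P_A and P_{2A} in ℤ/pℤ with a common difference such that A ⊆ P_A, |P_A| ≤ |A| + r + 1, P_{2A} ⊆ 2A, and |P_{2A}| ≥ 2|A| − 1. -/

import Mathlib

/-!
Write `k = |A|` and `m = |A + A|`. The hypotheses give `k + m ≤ p` and `m ≤ 3 k - 3`.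

*A large Fourier coefficient.* Let `S_B(d) = ∑ b ∈ B, e(d b / p)`. Counting the solutions of
`a + a' = b` gives `∑ d, S_A(d)² conj S_{A+A}(d) = p k²`. By Parseval and Cauchy–Schwarz, and since
`k (p - k) ≤ m (p - m)`, a uniform bound `|S_A(d)| ≤ M` for `d ≠ 0` implies `k² ≤ M m`
(`sq_card_le_of_expSum_le`).

*A dense half circle.* If, for every `d ≠ 0`, each half circle contains at most `n` points of the
dilate `d A`, then pairing off the points farthest from the direction of `S_A(d)` yields
`|S_A(d)| ≤ sin ((2 n - k) π / p) / sin (π / p)` (`sum_cos_le_of_half`, `norm_expSum_le`). For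
`n = ⌊(m + 3) / 3⌋` this contradicts the first step: `α` solves
`(2 α + 1) (α + 2) sin (π η / 3) = η p sin (π / p)`, and `sin x / x` is decreasing (`numeric_contra`).
Hence some half circle contains the dilate of a subset `W` of `A` with `3 |W| ≥ m + 4`.

*The integer theorem.* A half circle can be lifted to `ℤ` without changing sumset cardinalities, and
there `|W + W| ≤ 3 |W| - 4`. Freiman's `3 k - 4` theorem, in the form that also produces a progression
of length `2 |W| - 1` in `W + W`, applies (`freiman_3k4`). It follows from a statement on the gaps in
the sumset of two sets that are jointly dense in an interval (`long_interval`) and from the bound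
`|A + A| ≥ 3 |A| - 3` for sets at most half dense in their span (`freiman_sparse`).

*From `W` to `A`.* After a dilation, `W` lies in a short interval and `A + A` contains a long one. So
the complement `C` of `A + A` lies in a short interval too. No element of `A` is of the form `c - w`
with `c ∈ C` and `w ∈ W`, and by `long_interval` these differences fill a long interval. Thus `A` lies
in a short interval (`interval_of_core`), is lifted to `ℤ` in turn, and `freiman_3k4` for `A` itself is
the assertion (`structure_of_half`).
-/

open Finset Pointwise

/-- `P` is an arithmetic progression in `ZMod p` with difference `g`. -/
def IsAPWith {p : ℕ} (g : ZMod p) (P : Finset (ZMod p)) : Prop :=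
  ∃ a : ZMod p, ∃ k : ℕ, 1 ≤ k ∧ P = (Finset.range k).image (fun i : ℕ => a + (i : ZMod p) * g)

/-! ### Long intervals in sumsets of dense sets of integers -/

/-- If `c ∉ A + B`, then each `z ∈ A` excludes `c - z` from `B`, so `A` on an interval and `B` on the
reflected interval together have at most as many elements as the interval. -/
lemma gap_count (A B : Finset ℤ) (c x y : ℤ) (hxy : x ≤ y + 1) (hc : c ∉ A + B) :
    ((A.filter (fun z => x ≤ z ∧ z ≤ y)).card : ℤ)
      + ((B.filter (fun z => c - y ≤ z ∧ z ≤ c - x)).card : ℤ) ≤ y - x + 1 := by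
  have himg : ((B.filter (fun z => c - y ≤ z ∧ z ≤ c - x)).image (fun z => c - z)).card
      = (B.filter (fun z => c - y ≤ z ∧ z ≤ c - x)).card :=
    card_image_of_injective _ (fun u v h => by simpa using h)
  have hdisj : Disjoint (A.filter (fun z => x ≤ z ∧ z ≤ y))
      ((B.filter (fun z => c - y ≤ z ∧ z ≤ c - x)).image (fun z => c - z)) := by
    rw [Finset.disjoint_left]
    intro u hu hv
    simp only [mem_filter, mem_image] at hu hv
    obtain ⟨w, ⟨hw, -⟩, rfl⟩ := hv
    exact hc (by simpa using add_mem_add hu.1 hw)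
  have hsub : (A.filter (fun z => x ≤ z ∧ z ≤ y)) ∪
      ((B.filter (fun z => c - y ≤ z ∧ z ≤ c - x)).image (fun z => c - z)) ⊆ Icc x y := by
    intro u hu
    simp only [mem_union, mem_filter, mem_image, mem_Icc] at hu ⊢
    rcases hu with hu | ⟨w, ⟨-, hw⟩, rfl⟩
    · exact hu.2
    · omega
  have := card_le_card hsub
  rw [card_union_of_disjoint hdisj, himg, Int.card_Icc] at this
  omega

lemma card_filter_cover (A : Finset ℤ) (P Q R : ℤ → Prop) [DecidablePred P] [DecidablePred Q]
    [DecidablePred R] (h : ∀ z ∈ A, R z → P z ∨ Q z) :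
    (A.filter R).card ≤ (A.filter P).card + (A.filter Q).card := by
  refine le_trans (card_le_card ?_) (card_union_le _ _)
  intro z hz
  simp only [mem_filter, mem_union] at hz ⊢
  have := h z hz.1 hz.2
  tauto

lemma card_filter_interval_le (A : Finset ℤ) (x y : ℤ) (hxy : x ≤ y + 1) :
    ((A.filter (fun z => x ≤ z ∧ z ≤ y)).card : ℤ) ≤ y - x + 1 := by
  have : A.filter (fun z => x ≤ z ∧ z ≤ y) ⊆ Icc x y := by
    intro z; simp
  have := card_le_card this
  rw [Int.card_Icc] at this
  omega

/-- Two sets that are jointly dense in the longer of their spans `[0, a]` and `[0, b]` have a large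
sumset and, if the sumset is not too large, its middle part `(g, a + g')` has no gaps and is long.

Call `t ∈ [0, b]` a low gap if `t ∉ A + B` and a high gap if `a + t ∉ A + B`. Density forbids that `t`
is both, and neither kind lies in `B`, as `0, a ∈ A`; this gives the lower bound. If `A + B` is small,
every low gap is smaller than every high gap, and `g`, `g'` are the last low and the first high gap. -/
theorem long_interval (A B : Finset ℤ) (a b : ℤ) (hA : A ⊆ Icc 0 a) (hA0 : 0 ∈ A) (hAa : a ∈ A)
    (hB : B ⊆ Icc 0 b) (hB0 : 0 ∈ B) (hBb : b ∈ B) (hba : b ≤ a)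
    (hd : a + 3 ≤ A.card + B.card) :
    a + B.card ≤ ((A + B).card : ℤ) ∧
    (((A + B).card : ℤ) + 4 ≤ A.card + 2 * B.card →
      ∃ g g' : ℤ, -1 ≤ g ∧ g < g' ∧ g' ≤ b + 1 ∧
        (∀ t, g < t → t < a + g' → t ∈ A + B) ∧ (A.card : ℤ) + B.card ≤ a + g' - g) := by
  have hA' : ∀ z ∈ A, 0 ≤ z ∧ z ≤ a := fun z hz => by simpa using hA hz
  have hB' : ∀ z ∈ B, 0 ≤ z ∧ z ≤ b := fun z hz => by simpa using hB hz
  have hb0 := (hB' _ hBb).1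
  have hAB : ∀ z ∈ A + B, 0 ≤ z ∧ z ≤ a + b := by
    intro z hz
    obtain ⟨u, hu, v, hv, rfl⟩ := mem_add.1 hz
    have := hA' u hu; have := hB' v hv; omega
  -- every class modulo `a` is represented in `A + B`
  have key : ∀ t, 0 ≤ t → t ≤ a → t ∈ A + B ∨ a + t ∈ A + B := by
    intro t ht0 hta
    by_contra! hcon
    have h1 := gap_count A B t 0 t (by omega) hcon.1
    have h2 := gap_count A B (a + t) t a (by omega) hcon.2
    have h3 := card_filter_cover A (fun z => 0 ≤ z ∧ z ≤ t) (fun z => t ≤ z ∧ z ≤ a)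
      (fun _ => True) (fun z hz _ => by have := hA' z hz; omega)
    have h4 := card_filter_cover B (fun z => t - t ≤ z ∧ z ≤ t - 0)
      (fun z => a + t - a ≤ z ∧ z ≤ a + t - t)
      (fun _ => True) (fun z hz _ => by have := hB' z hz; omega)
    rw [filter_true] at h3 h4
    omega
  set G := (Icc 0 b).filter (fun t => t ∉ A + B) with hG
  set H := (Icc 0 b).filter (fun t => a + t ∉ A + B) with hH
  have hGm : ∀ t, t ∈ G ↔ (0 ≤ t ∧ t ≤ b) ∧ t ∉ A + B := by intro t; simp [hG]
  have hHm : ∀ t, t ∈ H ↔ (0 ≤ t ∧ t ≤ b) ∧ a + t ∉ A + B := by intro t; simp [hH]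
  have hGB : ∀ t ∈ G, t ∉ B := fun t ht htB =>
    ((hGm t).1 ht).2 (by simpa using add_mem_add hA0 htB)
  have hHB : ∀ t ∈ H, t ∉ B := fun t ht htB =>
    ((hHm t).1 ht).2 (add_mem_add hAa htB)
  have hGH : Disjoint G H := by
    rw [Finset.disjoint_left]
    intro t h1 h2
    rw [hGm] at h1; rw [hHm] at h2
    rcases key t h1.1.1 (by omega) with h | h
    · exact h1.2 h
    · exact h2.2 h
  have hcount : a + b + 1 ≤ ((A + B).card : ℤ) + G.card + H.card := by
    have hsub : Icc 0 (a + b) ⊆ (A + B) ∪ G ∪ H.image (fun t => a + t) := by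
      intro t ht
      rw [mem_Icc] at ht
      simp only [mem_union, mem_image, hGm, hHm]
      by_cases hts : t ∈ A + B
      · exact Or.inl (Or.inl hts)
      by_cases htb : t ≤ b
      · exact Or.inl (Or.inr ⟨⟨ht.1, htb⟩, hts⟩)
      by_cases hta : t < a
      · rcases key t ht.1 hta.le with h | h
        · exact absurd h hts
        · have := hAB _ h; omega
      · exact Or.inr ⟨t - a, ⟨by omega, by simpa using hts⟩, by omega⟩
    have h1 := card_le_card hsub
    have h2 := card_union_le ((A + B) ∪ G) (H.image (fun t => a + t))
    have h3 := card_union_le (A + B) G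
    have h4 : (H.image (fun t => a + t)).card ≤ H.card := card_image_le
    rw [Int.card_Icc] at h1
    omega
  -- the gaps, together with any further non-gaps outside `B`, are at most the `b + 1 - |B|` holes of `B`
  have hholes : ∀ S : Finset ℤ, S ⊆ Icc 0 b → Disjoint S G → Disjoint S H → Disjoint S B →
      (S.card : ℤ) + G.card + H.card + B.card ≤ b + 1 := by
    intro S hS h1 h2 h3
    have d1 : Disjoint (S ∪ G) H := by rw [disjoint_union_left]; exact ⟨h2, hGH⟩
    have d2 : Disjoint (S ∪ G ∪ H) B := by
      rw [disjoint_union_left, disjoint_union_left]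
      exact ⟨⟨h3, Finset.disjoint_left.2 hGB⟩, Finset.disjoint_left.2 hHB⟩
    have hsub : S ∪ G ∪ H ∪ B ⊆ Icc 0 b := by
      refine union_subset (union_subset (union_subset hS (filter_subset _ _)) (filter_subset _ _)) hB
    have := card_le_card hsub
    rw [card_union_of_disjoint d2, card_union_of_disjoint d1, card_union_of_disjoint h1,
      Int.card_Icc] at this
    omega
  refine ⟨?_, ?_⟩
  · have := hholes ∅ (by simp) (by simp) (by simp) (by simp)
    simp at this
    omega
  intro hsmall
  have hlow : ∀ g ∈ G, ((A.filter (fun z => z ≤ g)).card : ℤ)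
      + (B.filter (fun z => z ≤ g)).card ≤ g + 1 := by
    intro g hg
    have hg' := (hGm g).1 hg
    have h1 := gap_count A B g 0 g (by omega) hg'.2
    have e1 : A.filter (fun z => 0 ≤ z ∧ z ≤ g) = A.filter (fun z => z ≤ g) :=
      filter_congr (fun z hz => by have := hA' z hz; omega)
    have e2 : B.filter (fun z => g - g ≤ z ∧ z ≤ g - 0) = B.filter (fun z => z ≤ g) :=
      filter_congr (fun z hz => by have := hB' z hz; omega)
    rw [e1, e2] at h1
    omega
  have hhigh : ∀ g ∈ H, ((A.filter (fun z => a + g - b ≤ z)).card : ℤ)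
      + (B.filter (fun z => g ≤ z)).card ≤ b - g + 1 := by
    intro g hg
    have hg' := (hHm g).1 hg
    have h1 := gap_count A B (a + g) (a + g - b) a (by omega) hg'.2
    have e1 : A.filter (fun z => a + g - b ≤ z ∧ z ≤ a) = A.filter (fun z => a + g - b ≤ z) :=
      filter_congr (fun z hz => by have := hA' z hz; omega)
    have e2 : B.filter (fun z => a + g - a ≤ z ∧ z ≤ a + g - (a + g - b))
        = B.filter (fun z => g ≤ z) :=
      filter_congr (fun z hz => by have := hB' z hz; omega)
    rw [e1, e2] at h1
    omega
  have hsep : ∀ g ∈ G, ∀ g' ∈ H, g < g' := by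
    by_contra! hcon
    obtain ⟨g₁, hg₁, g₂, hg₂, hle⟩ := hcon
    -- a low gap above a high gap, at minimal distance
    have hne : ((G ×ˢ H).filter (fun q => q.2 ≤ q.1)).Nonempty :=
      ⟨(g₁, g₂), by simp [hg₁, hg₂, hle]⟩
    obtain ⟨⟨g, g'⟩, hmem, hmin⟩ := exists_min_image _ (fun q : ℤ × ℤ => q.1 - q.2) hne
    simp only [mem_filter, mem_product] at hmem
    obtain ⟨⟨hg, hg'⟩, hgg⟩ := hmem
    have hmin' : ∀ u ∈ G, ∀ v ∈ H, v ≤ u → g - g' ≤ u - v := by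
      intro u hu v hv huv
      exact hmin (u, v) (by simp [hu, hv, huv])
    have hne : g' ≠ g := by
      rintro rfl
      exact (Finset.disjoint_left.1 hGH hg hg')
    have hgr := (hGm g).1 hg
    have hgr' := (hHm g').1 hg'
    have h1 := hholes ((Ioo g' g) \ B)
      (by intro z; simp only [mem_sdiff, mem_Ioo, mem_Icc]; omega)
      (by
        rw [Finset.disjoint_left]
        intro z hz hzG
        simp only [mem_sdiff, mem_Ioo] at hz
        have := hmin' z hzG g' hg' (by omega)
        omega)
      (by
        rw [Finset.disjoint_left]
        intro z hz hzH
        simp only [mem_sdiff, mem_Ioo] at hz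
        have := hmin' g hg z hzH (by omega)
        omega)
      (by
        rw [Finset.disjoint_left]
        intro z hz
        simp only [mem_sdiff] at hz
        exact hz.2)
    have h2 : (Ioo g' g).card ≤ (Ioo g' g \ B).card + (B.filter (fun z => g' < z ∧ z < g)).card := by
      refine le_trans (card_le_card ?_) (card_union_le _ _)
      intro z
      simp only [mem_union, mem_sdiff, mem_Ioo, mem_filter]
      tauto
    rw [Int.card_Ioo] at h2
    have h3 := hlow g hg
    have h4 := hhigh g' hg'
    have h5 : B.card + (B.filter (fun z => g' < z ∧ z < g)).card ≤
        (B.filter (fun z => z ≤ g)).card + (B.filter (fun z => g' ≤ z)).card := by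
      rw [← card_union_add_card_inter (B.filter (fun z => z ≤ g))]
      refine add_le_add (card_le_card ?_) (card_le_card ?_)
      · intro z hz
        simp only [mem_union, mem_filter, hz, true_and]; omega
      · intro z
        simp only [mem_inter, mem_filter]
        rintro ⟨hz, h, h'⟩
        exact ⟨⟨hz, h'.le⟩, hz, h.le⟩
    have h6 : (A.card : ℤ) ≤ (A.filter (fun z => z ≤ g)).card
        + (A.filter (fun z => a + g' - b ≤ z)).card + max 0 (a + g' - b - g - 1) := by
      have c1 := card_filter_cover A (fun z => z ≤ g ∨ a + g' - b ≤ z)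
        (fun z => g + 1 ≤ z ∧ z ≤ a + g' - b - 1)
        (fun _ => True) (fun z hz _ => by omega)
      have c2 := card_filter_cover A (fun z => z ≤ g) (fun z => a + g' - b ≤ z)
        (fun z => z ≤ g ∨ a + g' - b ≤ z) (fun z hz h => h)
      rw [filter_true] at c1
      rcases le_or_gt (g + 1) (a + g' - b - 1 + 1) with h | h
      · have c3 := card_filter_interval_le A (g + 1) (a + g' - b - 1) h
        have := le_max_right 0 (a + g' - b - g - 1)
        omega
      · have c3 : A.filter (fun z => g + 1 ≤ z ∧ z ≤ a + g' - b - 1) = ∅ :=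
          filter_eq_empty_iff.2 (fun z hz => by omega)
        rw [c3, card_empty] at c1
        have := le_max_left 0 (a + g' - b - g - 1)
        omega
    have h7 : max 0 (a + g' - b - g - 1) ≤ a - b := by
      apply max_le <;> omega
    omega
  -- `g` is the last low gap (or `-1`), `g'` the first high gap (or `b + 1`)
  obtain ⟨g, hg, hgmax⟩ := exists_max_image (insert (-1) G) id (insert_nonempty _ _)
  obtain ⟨g', hg', hgmin⟩ := exists_min_image (insert (b + 1) H) id (insert_nonempty _ _)
  simp only [id, mem_insert, forall_eq_or_imp] at hg hgmax hg' hgmin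
  have hgr : -1 ≤ g ∧ g ≤ b := by
    rcases hg with h | h
    · omega
    · have := (hGm g).1 h; omega
  have hgr' : 0 ≤ g' ∧ g' ≤ b + 1 := by
    rcases hg' with h | h
    · omega
    · have := (hHm g').1 h; omega
  have hlt : g < g' := by
    rcases hg with h | h
    · omega
    rcases hg' with h' | h'
    · omega
    exact hsep g h g' h'
  refine ⟨g, g', hgr.1, hlt, hgr'.2, ?_, ?_⟩
  · intro t h1 h2
    by_contra hts
    by_cases htb : t ≤ b
    · have := hgmax.2 t ((hGm t).2 ⟨by omega, hts⟩)
      omega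
    by_cases hta : t < a
    · rcases key t (by omega) hta.le with h | h
      · exact hts h
      · have := hAB _ h; omega
    · have := hgmin.2 (t - a) ((hHm _).2 ⟨by omega, by simpa using hts⟩)
      omega
  · have h1 : ((A.filter (fun z => z ≤ g)).card : ℤ)
        + (B.filter (fun z => z ≤ g)).card ≤ g + 1 := by
      rcases hg with h | h
      · have e1 : A.filter (fun z => z ≤ g) = ∅ :=
          filter_eq_empty_iff.2 (fun z hz => by have := hA' z hz; omega)
        have e2 : B.filter (fun z => z ≤ g) = ∅ :=
          filter_eq_empty_iff.2 (fun z hz => by have := hB' z hz; omega)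
        rw [e1, e2]; simp; omega
      · exact hlow g h
    have h2 : ((A.filter (fun z => a + g' - b ≤ z)).card : ℤ)
        + (B.filter (fun z => g' ≤ z)).card ≤ b - g' + 1 := by
      rcases hg' with h | h
      · have e1 : A.filter (fun z => a + g' - b ≤ z) = ∅ :=
          filter_eq_empty_iff.2 (fun z hz => by have := hA' z hz; omega)
        have e2 : B.filter (fun z => g' ≤ z) = ∅ :=
          filter_eq_empty_iff.2 (fun z hz => by have := hB' z hz; omega)
        rw [e1, e2]; simp; omega
      · exact hhigh g' h
    have c1 := card_filter_cover A (fun z => z ≤ g ∨ a + g' - b ≤ z)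
      (fun z => g + 1 ≤ z ∧ z ≤ a + g' - b - 1)
      (fun _ => True) (fun z hz _ => by omega)
    have c2 := card_filter_cover A (fun z => z ≤ g) (fun z => a + g' - b ≤ z)
      (fun z => z ≤ g ∨ a + g' - b ≤ z) (fun z hz h => h)
    have c3 := card_filter_interval_le A (g + 1) (a + g' - b - 1) (by omega)
    have c4 := card_filter_cover B (fun z => z ≤ g ∨ g' ≤ z)
      (fun z => g + 1 ≤ z ∧ z ≤ g' - 1)
      (fun _ => True) (fun z hz _ => by omega)
    have c5 := card_filter_cover B (fun z => z ≤ g) (fun z => g' ≤ z)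
      (fun z => z ≤ g ∨ g' ≤ z) (fun z hz h => h)
    have c6 := card_filter_interval_le B (g + 1) (g' - 1) (by omega)
    rw [filter_true] at c1 c4
    omega

/-! ### Freiman's lower bound for sparse sets of integers -/

/-- `A` is not contained in a coset of a proper subgroup of `ℤ`. -/
def GcdOne (A : Finset ℤ) : Prop :=
  ∀ d : ℤ, (∀ x ∈ A, ∀ y ∈ A, d ∣ x - y) → IsUnit d

/-- Cutting `A` at two consecutive elements `q < r` with both kept in both parts, the sumsets of the
parts share only `q + q`, `q + r` and `r + r`. -/
lemma card_add_split (A : Finset ℤ) (q r : ℤ) (hqr : q < r)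
    (hcons : ∀ z ∈ A, z ≤ q ∨ r ≤ z) :
    (A.filter (fun z => z ≤ r) + A.filter (fun z => z ≤ r)).card
      + (A.filter (fun z => q ≤ z) + A.filter (fun z => q ≤ z)).card ≤ (A + A).card + 3 := by
  rw [← card_union_add_card_inter]
  refine add_le_add (card_le_card ?_) ?_
  · exact union_subset (add_subset_add (filter_subset _ _) (filter_subset _ _))
      (add_subset_add (filter_subset _ _) (filter_subset _ _))
  · refine le_trans (card_le_card (t := {q + q, q + r, r + r}) ?_) card_le_three
    intro z hz
    simp only [mem_inter, mem_add, mem_filter] at hz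
    obtain ⟨⟨x, ⟨hx, hxr⟩, y, ⟨hy, hyr⟩, hxy⟩, u, ⟨hu, huq⟩, v, ⟨hv, hvq⟩, huv⟩ := hz
    simp only [mem_insert, mem_singleton]
    have := hcons x hx; have := hcons y hy; have := hcons u hu; have := hcons v hv
    omega

/-- If adjoining a new maximum `t` creates only two new sums, then the difference between `t` and
the previous maximum `h` divides all differences. -/
lemma dvd_of_two_new (A : Finset ℤ) (t h : ℤ) (ht : t ∈ A) (hh : h ∈ A) (hht : h < t)
    (hmax : ∀ z ∈ A, z ≤ h ∨ z = t)
    (hc : (A + A).card ≤ (A.erase t + A.erase t).card + 2) :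
    ∀ z ∈ A, t - h ∣ t - z := by
  have hle : ∀ w ∈ A.erase t + A.erase t, w ≤ h + h := by
    intro w hw
    obtain ⟨x, hx, y, hy, rfl⟩ := mem_add.1 hw
    rw [mem_erase] at hx hy
    have := hmax x hx.2; have := hmax y hy.2; omega
  have hsub : A.erase t + A.erase t ⊆ A + A :=
    add_subset_add (erase_subset _ _) (erase_subset _ _)
  have hnew : ∀ w ∈ A + A, w ∉ A.erase t + A.erase t → w = t + t ∨ w = t + h := by
    by_contra! hcon
    obtain ⟨w, hw, hw', hw1, hw2⟩ := hcon
    have h1 : ({t + t, t + h, w} : Finset ℤ).card = 3 := by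
      rw [card_eq_three]
      exact ⟨t + t, t + h, w, by omega, by omega, by omega, rfl⟩
    have h2 : Disjoint (A.erase t + A.erase t) ({t + t, t + h, w} : Finset ℤ) := by
      rw [disjoint_right]
      intro x hx hx'
      simp only [mem_insert, mem_singleton] at hx
      have := hle x hx'
      rcases hx with rfl | rfl | rfl
      · omega
      · omega
      · exact hw' hx'
    have h3 : (A.erase t + A.erase t) ∪ {t + t, t + h, w} ⊆ A + A := by
      refine union_subset hsub ?_
      intro x hx
      simp only [mem_insert, mem_singleton] at hx
      rcases hx with rfl | rfl | rfl
      · exact add_mem_add ht ht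
      · exact add_mem_add ht hh
      · exact hw
    have := card_le_card h3
    rw [card_union_of_disjoint h2, h1] at this
    omega
  have main : ∀ n : ℕ, ∀ z ∈ A, (t - z).toNat = n → t - h ∣ t - z := by
    intro n
    induction n using Nat.strong_induction_on with
    | _ n ih =>
      intro z hz hn
      rcases hmax z hz with hzh | rfl
      · rcases eq_or_lt_of_le hzh with rfl | hlt
        · exact dvd_rfl
        · have hw : t + z ∈ A.erase t + A.erase t := by
            by_contra hw
            have := hnew _ (add_mem_add ht hz) hw
            omega
          obtain ⟨x, hx, y, hy, hxy⟩ := mem_add.1 hw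
          rw [mem_erase] at hx hy
          have hx' := hmax x hx.2
          have hy' := hmax y hy.2
          have d1 := ih (t - x).toNat (by omega) x hx.2 rfl
          have d2 := ih (t - y).toNat (by omega) y hy.2 rfl
          have : t - z = (t - x) + (t - y) := by omega
          rw [this]
          exact dvd_add d1 d2
      · simp
  exact fun z hz => main _ z hz rfl

lemma two_mul_card_le (S : Finset ℤ) (hS : S.Nonempty) : 2 * S.card ≤ (S + S).card + 1 := by
  have := cauchy_davenport_add_of_linearOrder_isCancelAdd hS hS
  omega

/-- Adjoining a point `t` at distance at least `2 |Q|` to a set `Q` of more than half density in its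
span and of small doubling brings the sumset up to `3 |Q|`. -/
lemma dense_insert (Q : Finset ℤ) (q t : ℤ) (hQ : Q ⊆ Icc 0 q) (hQ0 : 0 ∈ Q) (hQq : q ∈ Q)
    (hd : q + 3 ≤ 2 * Q.card) (hsmall : (Q + Q).card + 4 ≤ 3 * Q.card)
    (ht : 2 * (Q.card : ℤ) ≤ t) :
    3 * Q.card ≤ (insert t Q + insert t Q).card := by
  obtain ⟨-, h⟩ := long_interval Q Q q q hQ hQ0 hQq hQ hQ0 hQq le_rfl (by omega)
  obtain ⟨g, g', hg, hgg', hg', hlong, hlen⟩ := h (by omega)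
  have hQ' : ∀ z ∈ Q, 0 ≤ z ∧ z ≤ q := fun z hz => by simpa using hQ hz
  -- three disjoint blocks of sums: the elements of `Q` up to `g`, the long interval in `Q + Q`, and the
  -- sums `t + z` lying beyond that interval
  set S1 := Q.filter (fun z => z ≤ g)
  set S2 := Ioo g (q + g')
  set S3 := (insert t (Q.filter (fun z => g' - (t - q) ≤ z))).image (fun z => t + z)
  have hsub : S1 ∪ S2 ∪ S3 ⊆ insert t Q + insert t Q := by
    intro z hz
    simp only [S1, S2, S3, mem_union, mem_filter, mem_Ioo, mem_image, mem_insert] at hz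
    rcases hz with (hz | hz) | ⟨w, rfl | hw, rfl⟩
    · simpa using add_mem_add (mem_insert_of_mem hQ0 : (0 : ℤ) ∈ insert t Q)
        (mem_insert_of_mem hz.1 : z ∈ insert t Q)
    · exact add_subset_add (subset_insert _ _) (subset_insert _ _) (hlong z hz.1 hz.2)
    · exact add_mem_add (mem_insert_self _ _) (mem_insert_self _ _)
    · exact add_mem_add (mem_insert_self _ _) (mem_insert_of_mem hw.1)
  have d1 : Disjoint S1 S2 := by
    rw [Finset.disjoint_left]; intro z
    simp only [S1, S2, mem_filter, mem_Ioo]; omega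
  have d2 : Disjoint (S1 ∪ S2) S3 := by
    rw [Finset.disjoint_left]; intro z
    simp only [S1, S2, S3, mem_union, mem_filter, mem_Ioo, mem_image, mem_insert]
    rintro hz ⟨w, rfl | hw, rfl⟩
    · omega
    have := hQ' w hw.1
    omega
  have c3 : S3.card = (Q.filter (fun z => g' - (t - q) ≤ z)).card + 1 := by
    rw [card_image_of_injective _ (add_right_injective t), card_insert_of_notMem]
    intro h
    have := hQ' t (mem_filter.1 h).1
    omega
  have c2 : (S2.card : ℤ) = q + g' - g - 1 := by
    simp only [S2, Int.card_Ioo]; omega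
  have hle := card_le_card hsub
  rw [card_union_of_disjoint d2, card_union_of_disjoint d1, c3] at hle
  have e1 := card_filter_cover Q (fun z => z ≤ g ∨ g' - (t - q) ≤ z)
    (fun z => g + 1 ≤ z ∧ z ≤ g' - (t - q) - 1)
    (fun _ => True) (fun z hz _ => by omega)
  have e2 := card_filter_cover Q (fun z => z ≤ g) (fun z => g' - (t - q) ≤ z)
    (fun z => z ≤ g ∨ g' - (t - q) ≤ z) (fun z hz h => h)
  rw [filter_true] at e1
  rcases le_or_gt (g + 1) (g' - (t - q) - 1 + 1) with h | h
  · have e3 := card_filter_interval_le Q (g + 1) (g' - (t - q) - 1) h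
    simp only [S1] at hle
    omega
  · have e3 : Q.filter (fun z => g + 1 ≤ z ∧ z ≤ g' - (t - q) - 1) = ∅ :=
      filter_eq_empty_iff.2 (fun z hz => by omega)
    rw [e3, card_empty] at e1
    simp only [S1] at hle
    omega

lemma GcdOne.neg_image {A : Finset ℤ} (h : GcdOne A) : GcdOne (A.image (fun z => -z)) := by
  intro d hd
  apply h d
  intro x hx y hy
  have := hd (-y) (mem_image_of_mem _ hy) (-x) (mem_image_of_mem _ hx)
  rwa [neg_sub_neg] at this

lemma gcdOne_of_consecutive {A : Finset ℤ} {x y : ℤ} (hx : x ∈ A) (hy : y ∈ A) (h : y = x + 1) :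
    GcdOne A := by
  intro d hd
  have := hd y hy x hx
  rw [h, add_sub_cancel_left] at this
  exact isUnit_of_dvd_one this

/-- The inductive step at the top end: either `|A + A| ≥ 3 |A| - 3`, or the two largest elements
are consecutive. -/
lemma step_top (A : Finset ℤ) (lo hi : ℤ) (hA : A ⊆ Icc lo hi) (hlo : lo ∈ A) (hhi : hi ∈ A)
    (hg : GcdOne A) (hn : 3 ≤ A.card) (hd : 2 * (A.card : ℤ) ≤ hi - lo + 2)
    (ih : ∀ B : Finset ℤ, B.card < A.card → ∀ lo' hi', B ⊆ Icc lo' hi' → lo' ∈ B → hi' ∈ B →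
      GcdOne B → 2 * (B.card : ℤ) ≤ hi' - lo' + 2 → 3 * B.card ≤ (B + B).card + 3) :
    3 * A.card ≤ (A + A).card + 3 ∨ hi - 1 ∈ A := by
  have hA' : ∀ z ∈ A, lo ≤ z ∧ z ≤ hi := fun z hz => by simpa using hA hz
  have hlh : lo < hi := by omega
  set Q := A.erase hi with hQ
  have hQc : Q.card + 1 = A.card := card_erase_add_one hhi
  have hloQ : lo ∈ Q := mem_erase.2 ⟨hlh.ne, hlo⟩
  obtain ⟨q, hqQ, hqmax⟩ := exists_max_image Q id ⟨lo, hloQ⟩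
  simp only [id] at hqmax
  have hqA := (mem_erase.1 hqQ)
  have hqhi : q < hi := lt_of_le_of_ne (hA' q hqA.2).2 hqA.1
  have hmax : ∀ z ∈ A, z ≤ q ∨ z = hi := by
    intro z hz
    by_cases h : z = hi
    · exact Or.inr h
    · exact Or.inl (hqmax z (mem_erase.2 ⟨h, hz⟩))
  by_cases h2 : (A + A).card ≤ (Q + Q).card + 2
  · right
    have hdvd := dvd_of_two_new A hi q hhi hqA.2 hqhi hmax h2
    have hu : IsUnit (hi - q) := by
      apply hg
      intro x hx y hy
      have := dvd_sub (hdvd y hy) (hdvd x hx)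
      rwa [sub_sub_sub_cancel_left] at this
    have : hi - q = 1 := by
      rcases Int.isUnit_iff.1 hu with h | h <;> omega
    have : hi - 1 = q := by omega
    rw [this]; exact hqA.2
  left
  -- adjoining `hi` to `Q` creates at least three sums, so the bound for `Q` implies the bound for `A`
  by_cases hgood : 3 * Q.card ≤ (Q + Q).card + 3
  · omega
  have hsubQ : Q ⊆ A := erase_subset _ _
  by_cases hgQ : GcdOne Q
  · -- the remaining set is dense in its span
    have hQI : Q ⊆ Icc lo q := fun z hz => mem_Icc.2 ⟨(hA' z (hsubQ hz)).1, hqmax z hz⟩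
    have hdense : q - lo + 3 ≤ 2 * Q.card := by
      by_contra hcon
      exact hgood (ih Q (by omega) lo q hQI hloQ hqQ hgQ (by omega))
    have hinj : Function.Injective (fun z : ℤ => z - lo) := sub_left_injective
    set Q0 := Q.image (fun z => z - lo) with hQ0
    have hQ0c : Q0.card = Q.card := card_image_of_injective _ hinj
    have htr : ∀ S : Finset ℤ, (S.image (fun z => z - lo) + S.image (fun z => z - lo)).card
        = (S + S).card := by
      intro S
      have : S.image (fun z => z - lo) + S.image (fun z => z - lo)
          = (S + S).image (fun z => z - (lo + lo)) := by
        ext w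
        simp only [mem_add, mem_image]
        constructor
        · rintro ⟨_, ⟨x, hx, rfl⟩, _, ⟨y, hy, rfl⟩, rfl⟩
          exact ⟨x + y, ⟨x, hx, y, hy, rfl⟩, by ring⟩
        · rintro ⟨_, ⟨x, hx, y, hy, rfl⟩, rfl⟩
          exact ⟨_, ⟨x, hx, rfl⟩, _, ⟨y, hy, rfl⟩, by ring⟩
      rw [this, card_image_of_injective _ sub_left_injective]
    have := dense_insert Q0 (q - lo) (hi - lo)
      (by
        intro w hw
        obtain ⟨z, hz, rfl⟩ := mem_image.1 hw
        have := mem_Icc.1 (hQI hz)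
        simp only [mem_Icc]; omega)
      (mem_image.2 ⟨lo, hloQ, by ring⟩) (mem_image.2 ⟨q, hqQ, rfl⟩)
      (by omega) (by rw [htr]; omega) (by omega)
    have hins : insert (hi - lo) Q0 = A.image (fun z => z - lo) := by
      rw [hQ0, ← image_insert (fun z : ℤ => z - lo), hQ, insert_erase hhi]
    rw [hins, htr] at this
    omega
  · -- a proper subgroup coset and one point outside it
    unfold GcdOne at hgQ
    push Not at hgQ
    obtain ⟨d, hdQ, hdu⟩ := hgQ
    have hdhi : ¬ d ∣ hi - lo := by
      intro hdvd
      apply hdu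
      apply hg
      have hall : ∀ x ∈ A, d ∣ x - lo := by
        intro x hx
        rcases eq_or_ne x hi with rfl | hne
        · exact hdvd
        · exact hdQ x (mem_erase.2 ⟨hne, hx⟩) lo hloQ
      intro x hx y hy
      have := dvd_sub (hall x hx) (hall y hy)
      rwa [sub_sub_sub_cancel_right] at this
    have hQ2 := two_mul_card_le Q ⟨lo, hloQ⟩
    have d1 : Disjoint (Q + Q) (A.image (fun z => hi + z)) := by
      rw [Finset.disjoint_left]
      intro w hw hw'
      obtain ⟨x, hx, y, hy, rfl⟩ := mem_add.1 hw
      obtain ⟨z, hz, hzw⟩ := mem_image.1 hw'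
      have hx' := hqmax x hx
      have hy' := hqmax y hy
      rcases eq_or_ne z hi with rfl | hne
      · omega
      · apply hdhi
        have : hi - lo = (x - z) + (y - lo) := by omega
        rw [this]
        exact dvd_add (hdQ x hx z (mem_erase.2 ⟨hne, hz⟩)) (hdQ y hy lo hloQ)
    have hsub : (Q + Q) ∪ A.image (fun z => hi + z) ⊆ A + A := by
      refine union_subset (add_subset_add hsubQ hsubQ) ?_
      intro w hw
      obtain ⟨z, hz, rfl⟩ := mem_image.1 hw
      exact add_mem_add hhi hz
    have := card_le_card hsub
    rw [card_union_of_disjoint d1, card_image_of_injective _ (add_right_injective hi)] at this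
    omega

/-- Freiman's lower bound for sets that are at most half dense in their span. By `step_top` and its
mirror image, `A` may be assumed to begin and to end with two consecutive integers. It is then cut at
the last point `q` up to which it is more than half dense, and the bounds for the two parts add up. -/
theorem freiman_sparse : ∀ n : ℕ, ∀ A : Finset ℤ, A.card = n → ∀ lo hi : ℤ, A ⊆ Icc lo hi →
    lo ∈ A → hi ∈ A → GcdOne A → 2 * (A.card : ℤ) ≤ hi - lo + 2 →
    3 * A.card ≤ (A + A).card + 3 := by
  intro n
  induction n using Nat.strong_induction_on with
  | _ n IH =>
  intro A hAn lo hi hA hlo hhi hg hd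
  have ih : ∀ B : Finset ℤ, B.card < A.card → ∀ lo' hi', B ⊆ Icc lo' hi' → lo' ∈ B → hi' ∈ B →
      GcdOne B → 2 * (B.card : ℤ) ≤ hi' - lo' + 2 → 3 * B.card ≤ (B + B).card + 3 :=
    fun B hB => IH B.card (by omega) B rfl
  have hA' : ∀ z ∈ A, lo ≤ z ∧ z ≤ hi := fun z hz => by simpa using hA hz
  have hlh : lo ≤ hi := (hA' lo hlo).2
  have h0 : 0 < A.card := card_pos.2 ⟨lo, hlo⟩
  rcases lt_or_ge A.card 3 with hn | hn
  · rcases (by omega : A.card = 1 ∨ A.card = 2) with h1 | h2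
    · omega
    · exfalso
      have hne : lo ≠ hi := by omega
      have hAeq : A = {lo, hi} := by
        symm
        apply eq_of_subset_of_card_le
        · intro z hz
          simp only [mem_insert, mem_singleton] at hz
          rcases hz with rfl | rfl <;> assumption
        · rw [card_pair hne, h2]
      have hu : IsUnit (hi - lo) := by
        apply hg
        intro x hx y hy
        rw [hAeq] at hx hy
        simp only [mem_insert, mem_singleton] at hx hy
        rcases hx with rfl | rfl <;> rcases hy with rfl | rfl
        · simp
        · exact ⟨-1, by ring⟩
        · exact dvd_rfl
        · simp
      rcases Int.isUnit_iff.1 hu with h | h <;> omega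
  rcases step_top A lo hi hA hlo hhi hg hn hd ih with h | htop
  · exact h
  -- the same at the bottom end, by reflection
  have hnc : (A.image (fun z => -z)).card = A.card := card_image_of_injective _ neg_injective
  have hnn : A.image (fun z => -z) + A.image (fun z => -z) = (A + A).image (fun z => -z) := by
    ext w
    simp only [mem_add, mem_image]
    constructor
    · rintro ⟨_, ⟨x, hx, rfl⟩, _, ⟨y, hy, rfl⟩, rfl⟩
      exact ⟨x + y, ⟨x, hx, y, hy, rfl⟩, by ring⟩
    · rintro ⟨_, ⟨x, hx, y, hy, rfl⟩, rfl⟩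
      exact ⟨_, ⟨x, hx, rfl⟩, _, ⟨y, hy, rfl⟩, by ring⟩
  rcases step_top (A.image (fun z => -z)) (-hi) (-lo)
    (by
      intro w hw
      obtain ⟨z, hz, rfl⟩ := mem_image.1 hw
      have := hA' z hz
      simp only [mem_Icc]; omega)
    (mem_image_of_mem _ hhi) (mem_image_of_mem _ hlo) hg.neg_image (by omega) (by omega)
    (by rw [hnc]; exact ih) with h | hbot
  · rw [hnc, hnn, card_image_of_injective _ neg_injective] at h
    exact h
  have hbot' : lo + 1 ∈ A := by
    obtain ⟨z, hz, hz'⟩ := mem_image.1 hbot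
    have : lo + 1 = z := by omega
    rwa [this]
  -- `q` is the last point up to which `A` is more than half dense
  set F : ℤ → Finset ℤ := fun x => A.filter (fun z => z ≤ x) with hF
  obtain ⟨q, hq, hqmax⟩ := exists_max_image
    (A.filter (fun x => x - lo + 3 ≤ 2 * ((F x).card : ℤ))) id
    ⟨lo + 1, by
      rw [mem_filter]
      refine ⟨hbot', ?_⟩
      have : ({lo, lo + 1} : Finset ℤ) ⊆ F (lo + 1) := by
        intro z hz
        simp only [mem_insert, mem_singleton] at hz
        simp only [hF, mem_filter]
        rcases hz with rfl | rfl
        · exact ⟨hlo, by omega⟩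
        · exact ⟨hbot', le_rfl⟩
      have := card_le_card this
      rw [card_pair (by omega)] at this
      omega⟩
  simp only [id, mem_filter] at hq hqmax
  have hFhi : F hi = A := filter_true_of_mem (fun z hz => (hA' z hz).2)
  have hqhi : q < hi := by
    refine lt_of_le_of_ne (hA' q hq.1).2 ?_
    rintro rfl
    rw [hFhi] at hq
    omega
  obtain ⟨r, hr, hrmin⟩ := exists_min_image (A.filter (fun z => q < z)) id
    ⟨hi, mem_filter.2 ⟨hhi, hqhi⟩⟩
  simp only [id, mem_filter] at hr hrmin
  have hcons : ∀ z ∈ A, z ≤ q ∨ r ≤ z := by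
    intro z hz
    rcases le_or_gt z q with h | h
    · exact Or.inl h
    · exact Or.inr (hrmin z ⟨hz, h⟩)
  have hFr : (F r).card = (F q).card + 1 := by
    have : F r = insert r (F q) := by
      ext z
      simp only [hF, mem_insert, mem_filter]
      constructor
      · rintro ⟨hz, hzr⟩
        rcases hcons z hz with h | h
        · exact Or.inr ⟨hz, h⟩
        · exact Or.inl (le_antisymm hzr h)
      · rintro (rfl | h)
        · exact ⟨hr.1, le_rfl⟩
        · exact ⟨h.1, by omega⟩
    rw [this, card_insert_of_notMem]
    simp only [hF, mem_filter]; omega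
  have hrS : 2 * ((F r).card : ℤ) < r - lo + 3 := by
    by_contra hcon
    have := hqmax r ⟨hr.1, by omega⟩
    omega
  have hlo1q : lo + 1 ≤ q := by
    refine hqmax (lo + 1) ⟨hbot', ?_⟩
    have : ({lo, lo + 1} : Finset ℤ) ⊆ F (lo + 1) := by
      intro z hz
      simp only [mem_insert, mem_singleton] at hz
      simp only [hF, mem_filter]
      rcases hz with rfl | rfl
      · exact ⟨hlo, by omega⟩
      · exact ⟨hbot', le_rfl⟩
    have := card_le_card this
    rw [card_pair (by omega)] at this
    omega
  have hrhi : r < hi := by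
    refine lt_of_le_of_ne (hA' r hr.1).2 ?_
    intro h
    rcases hcons (hi - 1) htop with h' | h' <;> omega
  set U := A.filter (fun z => q ≤ z) with hU
  have hUc : U.card + (F q).card = A.card + 1 := by
    rw [← card_union_add_card_inter]
    congr 1
    · congr 1
      ext z
      simp only [hU, hF, mem_union, mem_filter]
      constructor
      · rintro (h | h) <;> exact h.1
      · intro hz
        rcases le_or_gt q z with h | h
        · exact Or.inl ⟨hz, h⟩
        · exact Or.inr ⟨hz, h.le⟩
    · rw [card_eq_one]
      refine ⟨q, ?_⟩
      ext z
      simp only [hU, hF, mem_inter, mem_filter, mem_singleton]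
      constructor
      · rintro ⟨⟨-, h⟩, -, h'⟩; omega
      · rintro rfl; exact ⟨⟨hq.1, le_rfl⟩, hq.1, le_rfl⟩
  -- both parts are at most half dense and contain two consecutive integers, so the inductive
  -- hypothesis applies to each
  have hsplit := card_add_split A q r hr.2 hcons
  have hFrlt : (F r).card < A.card := by
    apply card_lt_card
    refine ⟨filter_subset _ _, fun h => ?_⟩
    have := (mem_filter.1 (h hhi)).2
    omega
  have hUlt : U.card < A.card := by
    apply card_lt_card
    refine ⟨filter_subset _ _, fun h => ?_⟩
    have := (mem_filter.1 (h hlo)).2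
    omega
  have g1 := ih (F r) hFrlt lo r
    (fun z hz => mem_Icc.2 ⟨(hA' z (mem_filter.1 hz).1).1, (mem_filter.1 hz).2⟩)
    (mem_filter.2 ⟨hlo, by omega⟩) (mem_filter.2 ⟨hr.1, le_rfl⟩)
    (gcdOne_of_consecutive (x := lo) (y := lo + 1) (mem_filter.2 ⟨hlo, by omega⟩)
      (mem_filter.2 ⟨hbot', by omega⟩) rfl) (by omega)
  have g2 := ih U hUlt q hi
    (fun z hz => mem_Icc.2 ⟨(mem_filter.1 hz).2, (hA' z (mem_filter.1 hz).1).2⟩)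
    (mem_filter.2 ⟨hq.1, le_rfl⟩) (mem_filter.2 ⟨hhi, by omega⟩)
    (gcdOne_of_consecutive (x := hi - 1) (y := hi) (mem_filter.2 ⟨htop, by omega⟩)
      (mem_filter.2 ⟨hhi, by omega⟩) (by ring)) (by omega)
  have e1 : F r = A.filter (fun z => z ≤ r) := rfl
  rw [← e1, ← hU] at hsplit
  omega

/-! ### The `3k - 4` theorem in the integers -/

/-- Freiman's `3k - 4` theorem in `ℤ`, together with the long progression in the sumset. -/
theorem freiman_3k4 (A : Finset ℤ) (h : (A + A).card + 4 ≤ 3 * A.card) :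
    ∃ D a c : ℤ, 0 < D ∧
      (∀ x ∈ A, ∃ i : ℤ, 0 ≤ i ∧ i ≤ ((A + A).card : ℤ) - A.card ∧ x = a + D * i) ∧
      (∀ j : ℤ, 0 ≤ j → j < 2 * (A.card : ℤ) - 1 → c + D * j ∈ A + A) := by
  have hne : A.Nonempty := by
    rw [nonempty_iff_ne_empty]; rintro rfl; simp at h
  have h2 := two_mul_card_le A hne
  have hcard : 1 < A.card := by omega
  set lo := A.min' hne with hlo
  have hloA : lo ∈ A := A.min'_mem hne
  have hlole : ∀ x ∈ A, lo ≤ x := fun x hx => A.min'_le x hx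
  set D : ℤ := A.gcd (fun x => x - lo) with hD
  have hDdvd : ∀ x ∈ A, D ∣ x - lo := fun x hx => Finset.gcd_dvd hx
  have hDne : D ≠ 0 := by
    intro h0
    obtain ⟨x, hx, hxl⟩ := exists_mem_ne hcard lo
    have := hDdvd x hx
    rw [h0, zero_dvd_iff] at this
    omega
  have hDpos : 0 < D := by
    have : 0 ≤ D := by
      have h1 : normalize D = D := Finset.normalize_gcd
      rw [← h1]
      exact Int.nonneg_of_normalize_eq_self (by simp)
    omega
  -- `A` moved to start at `0` and divided by the gcd `D` of its differences
  set B : Finset ℤ := A.image (fun x => (x - lo) / D) with hB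
  have hinj : Function.Injective (fun y : ℤ => lo + D * y) := by
    intro y z hyz
    have : D * y = D * z := by simpa using hyz
    exact mul_left_cancel₀ hDne this
  have hinj2 : Function.Injective (fun y : ℤ => (lo + lo) + D * y) := by
    intro y z hyz
    have : D * y = D * z := by simpa using hyz
    exact mul_left_cancel₀ hDne this
  have hrec : ∀ x ∈ A, lo + D * ((x - lo) / D) = x := by
    intro x hx
    rw [Int.mul_ediv_cancel' (hDdvd x hx)]; ring
  have hAB : A = B.image (fun y => lo + D * y) := by
    rw [hB, image_image]
    ext x
    simp only [mem_image, Function.comp]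
    constructor
    · intro hx; exact ⟨x, hx, hrec x hx⟩
    · rintro ⟨y, hy, rfl⟩; rw [hrec y hy]; exact hy
  have hAAB : A + A = (B + B).image (fun y => (lo + lo) + D * y) := by
    ext w
    simp only [mem_add, mem_image]
    constructor
    · rintro ⟨x, hx, y, hy, rfl⟩
      refine ⟨_, ⟨_, mem_image_of_mem _ hx, _, mem_image_of_mem _ hy, rfl⟩, ?_⟩
      have := hrec x hx
      have := hrec y hy
      linarith
    · rintro ⟨_, ⟨x, hx, y, hy, rfl⟩, rfl⟩
      refine ⟨lo + D * x, ?_, lo + D * y, ?_, by ring⟩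
      · rw [hAB]; exact mem_image_of_mem _ hx
      · rw [hAB]; exact mem_image_of_mem _ hy
  have hc1 : A.card = B.card := by
    conv_lhs => rw [hAB]
    exact card_image_of_injective _ hinj
  have hc2 : (A + A).card = (B + B).card := by
    rw [hAAB]; exact card_image_of_injective _ hinj2
  have hBne : B.Nonempty := hne.image _
  have hB0 : (0 : ℤ) ∈ B := mem_image.2 ⟨lo, hloA, by simp⟩
  have hBnn : ∀ y ∈ B, 0 ≤ y := by
    intro y hy
    obtain ⟨x, hx, rfl⟩ := mem_image.1 hy
    exact Int.ediv_nonneg (by have := hlole x hx; omega) hDpos.le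
  set L := B.max' hBne with hL
  have hLB : L ∈ B := B.max'_mem hBne
  have hBL : B ⊆ Icc 0 L := fun y hy => mem_Icc.2 ⟨hBnn y hy, B.le_max' y hy⟩
  have hgcd : GcdOne B := by
    intro e he
    have : D * e ∣ D := by
      apply Finset.dvd_gcd
      intro x hx
      have h1 := he _ (mem_image_of_mem _ hx) _ hB0
      rw [sub_zero] at h1
      have h2 := mul_dvd_mul_left D h1
      rwa [Int.mul_ediv_cancel' (hDdvd x hx)] at h2
    have h3 : D * e ∣ D * 1 := by simpa using this
    exact isUnit_of_dvd_one ((mul_dvd_mul_iff_left hDne).1 h3)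
  have hLsmall : L + 3 ≤ B.card + B.card := by
    by_contra hcon
    have := freiman_sparse _ B rfl 0 L hBL hB0 hLB hgcd (by omega)
    omega
  obtain ⟨hlen, hlong⟩ := long_interval B B L L hBL hB0 hLB hBL hB0 hLB le_rfl hLsmall
  obtain ⟨g, g', -, -, -, hmem, hgg⟩ := hlong (by omega)
  refine ⟨D, lo, (lo + lo) + D * (g + 1), hDpos, ?_, ?_⟩
  · intro x hx
    have hxB : (x - lo) / D ∈ B := mem_image_of_mem _ hx
    have := mem_Icc.1 (hBL hxB)
    exact ⟨_, this.1, by omega, (hrec x hx).symm⟩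
  · intro j hj hj'
    rw [hAAB]
    refine mem_image.2 ⟨g + 1 + j, hmem _ (by omega) (by omega), by ring⟩

/-! ### From a half circle to the whole set -/

lemma intCast_inj_of_lt {p : ℕ} {a b : ℤ} (h1 : a - b < p) (h2 : b - a < p)
    (h : (a : ZMod p) = b) : a = b := by
  rw [ZMod.intCast_eq_intCast_iff_dvd_sub] at h
  have := Int.eq_zero_of_abs_lt_dvd h (by rw [abs_lt]; omega)
  omega

lemma exists_int_rep {p : ℕ} [NeZero p] (a : ZMod p) :
    ∃ t : ℤ, 0 ≤ t ∧ t < p ∧ (t : ZMod p) = a :=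
  ⟨a.val, by positivity, by exact_mod_cast a.val_lt, by simp⟩

/-- Symmetric form of `long_interval`, without normalisation of the minima. -/
lemma exists_interval_add (B C : Finset ℤ) (N M : ℤ) (hB : B ⊆ Icc 0 M) (hC : C ⊆ Icc 0 N)
    (hBne : B.Nonempty) (hCne : C.Nonempty)
    (h1 : N + 3 ≤ B.card + C.card) (h2 : M + 3 ≤ B.card + C.card)
    (h3 : (C + B).card + 4 ≤ C.card + 2 * B.card) (h4 : (C + B).card + 4 ≤ B.card + 2 * C.card) :
    ∃ s : ℤ, ∀ t : ℤ, 0 ≤ t → t < (B.card : ℤ) + C.card - 1 → s + t ∈ C + B := by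
  have key : ∀ B C : Finset ℤ, ∀ N : ℤ, ∀ hB : B.Nonempty, ∀ hC : C.Nonempty, C ⊆ Icc 0 N →
      B.max' hB - B.min' hB ≤ C.max' hC - C.min' hC →
      N + 3 ≤ B.card + C.card → (C + B).card + 4 ≤ C.card + 2 * B.card →
      ∃ s : ℤ, ∀ t : ℤ, 0 ≤ t → t < (B.card : ℤ) + C.card - 1 → s + t ∈ C + B := by
    intro B C N hB hC hCN hd h1 h3
    set b := B.min' hB
    set c := C.min' hC
    set b' := B.max' hB
    set c' := C.max' hC
    have hbB : b ∈ B := B.min'_mem hB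
    have hcC : c ∈ C := C.min'_mem hC
    have hbB' : b' ∈ B := B.max'_mem hB
    have hcC' : c' ∈ C := C.max'_mem hC
    have hcN := mem_Icc.1 (hCN hcC)
    have hcN' := mem_Icc.1 (hCN hcC')
    have eB : (B.image (· - b)).card = B.card := card_image_of_injective _ (sub_left_injective)
    have eC : (C.image (· - c)).card = C.card := card_image_of_injective _ (sub_left_injective)
    have eCB : C.image (· - c) + B.image (· - b) = (C + B).image (· - (c + b)) := by
      ext w
      simp only [mem_add, mem_image]
      constructor
      · rintro ⟨_, ⟨x, hx, rfl⟩, _, ⟨y, hy, rfl⟩, rfl⟩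
        exact ⟨x + y, ⟨x, hx, y, hy, rfl⟩, by ring⟩
      · rintro ⟨_, ⟨x, hx, y, hy, rfl⟩, rfl⟩
        exact ⟨_, ⟨x, hx, rfl⟩, _, ⟨y, hy, rfl⟩, by ring⟩
    have eCB' : ((C + B).image (· - (c + b))).card = (C + B).card :=
      card_image_of_injective _ (sub_left_injective)
    obtain ⟨-, h⟩ := long_interval (C.image (· - c)) (B.image (· - b)) (c' - c) (b' - b)
      (by
        intro w hw
        obtain ⟨z, hz, rfl⟩ := mem_image.1 hw
        have := C.min'_le z hz
        have := C.le_max' z hz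
        simp only [mem_Icc]; omega)
      (mem_image.2 ⟨c, hcC, by simp⟩) (mem_image.2 ⟨c', hcC', rfl⟩)
      (by
        intro w hw
        obtain ⟨z, hz, rfl⟩ := mem_image.1 hw
        have := B.min'_le z hz
        have := B.le_max' z hz
        simp only [mem_Icc]; omega)
      (mem_image.2 ⟨b, hbB, by simp⟩) (mem_image.2 ⟨b', hbB', rfl⟩) hd
      (by rw [eB, eC]; omega)
    rw [eCB, eCB', eB, eC] at h
    obtain ⟨g, g', -, -, -, hmem, hgg⟩ := h (by omega)
    refine ⟨g + 1 + (c + b), fun t ht ht' => ?_⟩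
    obtain ⟨w, hw, hw'⟩ := mem_image.1 (hmem (g + 1 + t) (by omega) (by omega))
    have : g + 1 + (c + b) + t = w := by omega
    rwa [this]
  by_cases hd : B.max' hBne - B.min' hBne ≤ C.max' hCne - C.min' hCne
  · exact key B C N hBne hCne hC hd h1 h3
  · obtain ⟨s, hs⟩ := key C B M hCne hBne hB (by omega) (by omega) (by rw [add_comm B C]; exact h4)
    refine ⟨s, fun t ht ht' => ?_⟩
    rw [add_comm C B]
    exact hs t ht (by omega)

/-- If a large part `A₀` of `A` lies in a short interval, and `A + A` contains a long interval,
then `A` itself lies in a short interval: `A` avoids every difference of an element outside `A + A`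
and an element of `A₀`, and these differences fill a long interval. -/
lemma interval_of_core {p : ℕ} [NeZero p] (A A₀ : Finset (ZMod p)) (x y : ZMod p) (hA₀ : A₀ ⊆ A)
    (hx : ∀ a ∈ A₀, ∃ i : ℤ, 0 ≤ i ∧ i ≤ ((A + A).card : ℤ) - A₀.card ∧ a = x + i)
    (hy : ∀ j : ℤ, 0 ≤ j → j < 2 * (A₀.card : ℤ) - 1 → y + j ∈ A + A)
    (hm : (A + A).card + 4 ≤ 3 * A₀.card) (hkm : A.card + (A + A).card ≤ p) :
    ∃ z : ZMod p, ∀ a ∈ A, ∃ i : ℤ, 0 ≤ i ∧ i ≤ ((A + A).card : ℤ) - A₀.card ∧ a = z + i := by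
  have hnk := card_le_card hA₀
  set n := A₀.card with hn
  set m := (A + A).card with hmdef
  set k := A.card with hk
  have hcompl : (A + A)ᶜ.card = p - m := by
    rw [card_compl, ZMod.card]
  have hcomplA : Aᶜ.card = p - k := by
    rw [card_compl, ZMod.card]
  -- `C` represents the complement of `A + A`, and `B` the set `-A₀`, as integers in short intervals
  set C : Finset ℤ := (Icc (0 : ℤ) (p - 2 * n)).filter
    (fun u => y + ((2 * n - 1 + u : ℤ) : ZMod p) ∉ A + A) with hC
  set B : Finset ℤ := (Icc (0 : ℤ) (m - n)).filter
    (fun v => x + ((m - n - v : ℤ) : ZMod p) ∈ A₀) with hB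
  have hCc : p - m ≤ C.card := by
    rw [← hcompl]
    apply le_trans _ (card_image_le (s := C)
      (f := fun u : ℤ => y + ((2 * n - 1 + u : ℤ) : ZMod p)))
    apply card_le_card
    intro w hw
    rw [mem_compl] at hw
    obtain ⟨t, ht0, htp, ht⟩ := exists_int_rep (w - y)
    have hwt : w = y + (t : ZMod p) := by rw [ht]; ring
    have htn : 2 * (n : ℤ) - 1 ≤ t := by
      by_contra hlt
      exact hw (hwt ▸ hy t ht0 (by omega))
    have e : 2 * (n : ℤ) - 1 + (t - (2 * n - 1)) = t := by ring
    refine mem_image.2 ⟨t - (2 * n - 1), ?_, ?_⟩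
    · rw [hC, mem_filter, mem_Icc, e, ← hwt]
      exact ⟨by omega, hw⟩
    · simp only [e]; exact hwt.symm
  have hBc : n ≤ B.card := by
    rw [hn]
    apply le_trans _ (card_image_le (s := B)
      (f := fun v : ℤ => x + ((m - n - v : ℤ) : ZMod p)))
    apply card_le_card
    intro w hw
    obtain ⟨i, hi0, hi, hwi⟩ := hx w hw
    have e : (m : ℤ) - n - (m - n - i) = i := by ring
    refine mem_image.2 ⟨m - n - i, ?_, ?_⟩
    · rw [hB, mem_filter, mem_Icc, e, ← hwi]
      exact ⟨by omega, hw⟩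
    · simp only [e]; exact hwi.symm
  set e : ZMod p := y + ((2 * n - 1 : ℤ) : ZMod p) - x - ((m - n : ℤ) : ZMod p) with he
  have hCB : ∀ w ∈ C + B, e + (w : ZMod p) ∉ A := by
    intro w hw hwA
    obtain ⟨u, hu, v, hv, rfl⟩ := mem_add.1 hw
    apply (mem_filter.1 hu).2
    have := add_mem_add hwA (hA₀ (mem_filter.1 hv).2)
    convert this using 1
    rw [he]; push_cast; ring
  have hCBc : (C + B).card ≤ p - k := by
    rw [← hcomplA, ← card_image_of_injOn (s := C + B) (f := fun w : ℤ => e + (w : ZMod p))]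
    · apply card_le_card
      intro w hw
      obtain ⟨z, hz, rfl⟩ := mem_image.1 hw
      rw [mem_compl]
      exact hCB z hz
    · intro w hw w' hw' hww
      have r : ∀ w ∈ C + B, 0 ≤ w ∧ w < p := by
        intro w hw
        obtain ⟨u, hu, v, hv, rfl⟩ := mem_add.1 hw
        have h1 := mem_Icc.1 (mem_filter.1 hu).1
        have h2 := mem_Icc.1 (mem_filter.1 hv).1
        omega
      have h1 := r w hw
      have h2 := r w' hw'
      exact intCast_inj_of_lt (by omega) (by omega) (add_left_cancel hww)
  obtain ⟨s, hs⟩ := exists_interval_add B C (p - 2 * n) (m - n) (filter_subset _ _)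
    (filter_subset _ _) (card_pos.1 (by omega)) (card_pos.1 (by omega)) (by omega) (by omega)
    (by omega) (by omega)
  refine ⟨e + (s : ZMod p) + ((p - m + n - 1 : ℤ) : ZMod p), fun a ha => ?_⟩
  obtain ⟨t, ht0, htp, ht⟩ := exists_int_rep (a - (e + (s : ZMod p)))
  have hat : a = e + ((s + t : ℤ) : ZMod p) := by push_cast; rw [ht]; ring
  have : (p : ℤ) - m + n - 1 ≤ t := by
    by_contra hlt
    exact hCB _ (hs t ht0 (by omega)) (hat ▸ ha)
  refine ⟨t - (p - m + n - 1), by omega, by omega, ?_⟩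
  rw [hat]; push_cast; ring

/-- A set contained in a short interval inherits the integer theorem. -/
lemma rectify {p : ℕ} [Fact p.Prime] (A : Finset (ZMod p)) (z : ZMod p) (l : ℤ)
    (hl : 2 * l + 1 ≤ p) (hA : ∀ a ∈ A, ∃ i : ℤ, 0 ≤ i ∧ i ≤ l ∧ a = z + i)
    (hm : (A + A).card + 4 ≤ 3 * A.card) (hk : 2 ≤ A.card) :
    ∃ g a c : ZMod p, g ≠ 0 ∧
      (∀ x ∈ A, ∃ i : ℤ, 0 ≤ i ∧ i ≤ ((A + A).card : ℤ) - A.card ∧ x = a + i * g) ∧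
      (∀ j : ℤ, 0 ≤ j → j < 2 * (A.card : ℤ) - 1 → c + j * g ∈ A + A) := by
  set B : Finset ℤ := (Icc 0 l).filter (fun i => z + (i : ZMod p) ∈ A) with hB
  have hBA : ∀ i ∈ B, z + (i : ZMod p) ∈ A := fun i hi => (mem_filter.1 hi).2
  have hBl : ∀ i ∈ B, 0 ≤ i ∧ i ≤ l := fun i hi => mem_Icc.1 (mem_filter.1 hi).1
  have hBBl : ∀ i ∈ B + B, 0 ≤ i ∧ i < p := by
    intro i hi
    obtain ⟨u, hu, v, hv, rfl⟩ := mem_add.1 hi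
    have := hBl u hu
    have := hBl v hv
    omega
  have hBBA : ∀ i ∈ B + B, z + z + (i : ZMod p) ∈ A + A := by
    intro i hi
    obtain ⟨u, hu, v, hv, rfl⟩ := mem_add.1 hi
    have := add_mem_add (hBA u hu) (hBA v hv)
    convert this using 1
    push_cast; ring
  have hex : ∀ a ∈ A, ∃ i ∈ B, a = z + (i : ZMod p) := by
    intro a ha
    obtain ⟨i, hi0, hil, hi⟩ := hA a ha
    exact ⟨i, mem_filter.2 ⟨mem_Icc.2 ⟨hi0, hil⟩, hi ▸ ha⟩, hi⟩
  have hBc : B.card = A.card := by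
    rw [← card_image_of_injOn (s := B) (f := fun w : ℤ => z + (w : ZMod p))]
    · congr 1
      ext a
      rw [mem_image]
      constructor
      · rintro ⟨i, hi, rfl⟩; exact hBA i hi
      · intro ha
        obtain ⟨i, hi, h⟩ := hex a ha
        exact ⟨i, hi, h.symm⟩
    · intro w hw w' hw' hww
      have h1 := hBl w hw
      have h2 := hBl w' hw'
      exact intCast_inj_of_lt (by omega) (by omega) (add_left_cancel hww)
  have hBBc : (B + B).card = (A + A).card := by
    rw [← card_image_of_injOn (s := B + B) (f := fun w : ℤ => z + z + (w : ZMod p))]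
    · congr 1
      ext a
      rw [mem_image]
      constructor
      · rintro ⟨i, hi, rfl⟩; exact hBBA i hi
      · intro ha
        obtain ⟨x, hx, y, hy, rfl⟩ := mem_add.1 ha
        obtain ⟨i, hi, rfl⟩ := hex x hx
        obtain ⟨j, hj, rfl⟩ := hex y hy
        exact ⟨i + j, add_mem_add hi hj, by push_cast; ring⟩
    · intro w hw w' hw' hww
      have h1 := hBBl w hw
      have h2 := hBBl w' hw'
      exact intCast_inj_of_lt (by omega) (by omega) (add_left_cancel hww)
  obtain ⟨D, a, c, hD, h1, h2⟩ := freiman_3k4 B (by omega)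
  rw [hBc, hBBc] at h1
  rw [hBc] at h2
  refine ⟨(D : ZMod p), z + a, z + z + c, ?_, ?_, ?_⟩
  · intro h0
    have e0 := hBBl _ (h2 0 le_rfl (by omega))
    have e1 := hBBl _ (h2 1 (by omega) (by omega))
    have : D = 0 := intCast_inj_of_lt (p := p) (by omega) (by omega) (by simpa using h0)
    omega
  · intro x hx
    obtain ⟨i, hi, rfl⟩ := hex x hx
    obtain ⟨j, hj0, hj, rfl⟩ := h1 i hi
    exact ⟨j, hj0, hj, by push_cast; ring⟩
  · intro j hj0 hj
    have := hBBA _ (h2 j hj0 hj)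
    convert this using 1
    push_cast; ring

/-- The structural conclusion, from a dense part of `A` in a half circle. -/
lemma structure_of_half {p : ℕ} [Fact p.Prime] (A : Finset (ZMod p)) (W : Finset ℤ) (u : ZMod p)
    (t : ℤ) (hu : u ≠ 0) (hW : W ⊆ Icc t (t + (p - 1) / 2)) (hWA : ∀ w ∈ W, u * (w : ZMod p) ∈ A)
    (hn : (A + A).card + 4 ≤ 3 * W.card) (hkm : A.card + (A + A).card ≤ p) :
    ∃ g a c : ZMod p, g ≠ 0 ∧
      (∀ x ∈ A, ∃ i : ℤ, 0 ≤ i ∧ i ≤ ((A + A).card : ℤ) - A.card ∧ x = a + i * g) ∧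
      (∀ j : ℤ, 0 ≤ j → j < 2 * (A.card : ℤ) - 1 → c + j * g ∈ A + A) := by
  have hp := (Fact.out : p.Prime).two_le
  have hWt : ∀ w ∈ W, t ≤ w ∧ w ≤ t + (p - 1) / 2 := fun w hw => mem_Icc.1 (hW hw)
  have hWW : ∀ w ∈ W + W, 2 * t ≤ w ∧ w < 2 * t + p := by
    intro i hi
    obtain ⟨u, hu, v, hv, rfl⟩ := mem_add.1 hi
    have := hWt u hu
    have := hWt v hv
    omega
  have hWWA : ∀ w ∈ W + W, u * (w : ZMod p) ∈ A + A := by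
    intro i hi
    obtain ⟨x, hx, y, hy, rfl⟩ := mem_add.1 hi
    have := add_mem_add (hWA x hx) (hWA y hy)
    convert this using 1
    push_cast; ring
  have hWWc : (W + W).card ≤ (A + A).card := by
    apply card_le_card_of_injOn _ hWWA
    intro w hw w' hw' hww
    have h1 := hWW w hw
    have h2 := hWW w' hw'
    exact intCast_inj_of_lt (by omega) (by omega) (mul_left_cancel₀ hu hww)
  have hinjW : Set.InjOn (fun w : ℤ => u * (w : ZMod p)) W := by
    intro w hw w' hw' hww
    have h1 := hWt w hw
    have h2 := hWt w' hw'
    exact intCast_inj_of_lt (by omega) (by omega) (mul_left_cancel₀ hu hww)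
  have hWc : W.card ≤ A.card := card_le_card_of_injOn _ hWA hinjW
  obtain ⟨D, a, c, hD, h1, h2⟩ := freiman_3k4 W (by omega)
  have hDp : (D : ZMod p) ≠ 0 := by
    intro h0
    have e0 := hWW _ (h2 0 le_rfl (by omega))
    have e1 := hWW _ (h2 1 (by omega) (by omega))
    have : D = 0 := intCast_inj_of_lt (p := p) (by omega) (by omega) (by simpa using h0)
    omega
  set g : ZMod p := u * D with hg
  have hg0 : g ≠ 0 := mul_ne_zero hu hDp
  have hginj : Function.Injective (fun x : ZMod p => g⁻¹ * x) :=
    mul_right_injective₀ (inv_ne_zero hg0)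
  have hgg : ∀ x : ZMod p, g⁻¹ * (g * x) = x := fun x => inv_mul_cancel_left₀ hg0 x
  -- dilated so that the progression containing the image of `W` has difference `1`
  set A' := A.image (fun x => g⁻¹ * x) with hA'
  have hA'c : A'.card = A.card := card_image_of_injective _ hginj
  have hAA' : A' + A' = (A + A).image (fun x => g⁻¹ * x) := by
    ext w
    simp only [hA', mem_add, mem_image]
    constructor
    · rintro ⟨_, ⟨x, hx, rfl⟩, _, ⟨y, hy, rfl⟩, rfl⟩
      exact ⟨x + y, ⟨x, hx, y, hy, rfl⟩, by ring⟩
    · rintro ⟨_, ⟨x, hx, y, hy, rfl⟩, rfl⟩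
      exact ⟨_, ⟨x, hx, rfl⟩, _, ⟨y, hy, rfl⟩, by ring⟩
  have hAA'c : (A' + A').card = (A + A).card := by
    rw [hAA']; exact card_image_of_injective _ hginj
  set A₀ := W.image (fun w : ℤ => g⁻¹ * (u * (w : ZMod p))) with hA₀
  have hA₀c : A₀.card = W.card := by
    apply card_image_of_injOn
    intro w hw w' hw' hww
    exact hinjW hw hw' (hginj hww)
  have hlin : ∀ b i : ℤ, g⁻¹ * (u * ((b + D * i : ℤ) : ZMod p)) = g⁻¹ * (u * b) + i := by
    intro b i
    rw [← hgg (i : ZMod p), hg]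
    push_cast; ring
  obtain ⟨z, hz⟩ := interval_of_core A' A₀ (g⁻¹ * (u * a)) (g⁻¹ * (u * c))
    (by
      intro x hx
      obtain ⟨w, hw, rfl⟩ := mem_image.1 hx
      exact mem_image_of_mem _ (hWA w hw))
    (by
      intro x hx
      obtain ⟨w, hw, rfl⟩ := mem_image.1 hx
      obtain ⟨i, hi0, hi, rfl⟩ := h1 w hw
      exact ⟨i, hi0, by omega, hlin a i⟩)
    (by
      intro j hj0 hj
      rw [← hlin, hAA']
      exact mem_image_of_mem _ (hWWA _ (h2 j hj0 (by omega))))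
    (by omega) (by omega)
  obtain ⟨g', a', c', hg', h1', h2'⟩ := rectify A' z _ (by omega) hz (by omega) (by omega)
  rw [hAA'c, hA'c] at h1'
  rw [hA'c] at h2'
  have hgg' : ∀ x : ZMod p, g * (g⁻¹ * x) = x := fun x => mul_inv_cancel_left₀ hg0 x
  refine ⟨g * g', g * a', g * c', mul_ne_zero hg0 hg', ?_, ?_⟩
  · intro x hx
    obtain ⟨i, hi0, hi, h⟩ := h1' _ (mem_image_of_mem _ hx)
    refine ⟨i, hi0, hi, ?_⟩
    rw [← hgg' x, h]; ring
  · intro j hj0 hj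
    have := h2' j hj0 hj
    rw [hAA'] at this
    obtain ⟨w, hw, h⟩ := mem_image.1 this
    have e : g * c' + j * (g * g') = w := by
      rw [← hgg' w, h]; ring
    rwa [e]

/-- `structure_of_half` in terms of `IsAPWith`. -/
lemma progressions_of_half {p : ℕ} [Fact p.Prime] (A : Finset (ZMod p)) (W : Finset ℤ) (u : ZMod p)
    (t : ℤ) (hu : u ≠ 0) (hW : W ⊆ Icc t (t + (p - 1) / 2)) (hWA : ∀ w ∈ W, u * (w : ZMod p) ∈ A)
    (hn : (A + A).card + 4 ≤ 3 * W.card) (hkm : A.card + (A + A).card ≤ p)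
    (hk : 1 ≤ A.card) (hkk : A.card ≤ (A + A).card) :
    ∃ g : ZMod p, g ≠ 0 ∧ ∃ PA P2A : Finset (ZMod p),
      IsAPWith g PA ∧ IsAPWith g P2A ∧
      A ⊆ PA ∧ (PA.card : ℤ) ≤ (A + A).card - A.card + 1 ∧
      P2A ⊆ A + A ∧ 2 * (A.card : ℤ) - 1 ≤ (P2A.card : ℤ) := by
  obtain ⟨g, a, c, hg, h1, h2⟩ := structure_of_half A W u t hu hW hWA hn hkm
  refine ⟨g, hg, (range ((A + A).card - A.card + 1)).image (fun i : ℕ => a + (i : ZMod p) * g),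
    (range (2 * A.card - 1)).image (fun i : ℕ => c + (i : ZMod p) * g),
    ⟨a, _, by omega, rfl⟩, ⟨c, _, by omega, rfl⟩, ?_, ?_, ?_, ?_⟩
  · intro x hx
    obtain ⟨i, hi0, hi, rfl⟩ := h1 x hx
    lift i to ℕ using hi0
    exact mem_image.2 ⟨i, mem_range.2 (by omega), by simp⟩
  · have := card_image_le (s := range ((A + A).card - A.card + 1))
      (f := fun i : ℕ => a + (i : ZMod p) * g)
    rw [card_range] at this
    omega
  · intro x hx
    obtain ⟨j, hj, rfl⟩ := mem_image.1 hx
    have := h2 j (by omega) (by have := mem_range.1 hj; omega)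
    simpa using this
  · rw [card_image_of_injOn, card_range]
    · omega
    · intro i hi j hj hij
      have h := mul_right_cancel₀ hg (add_left_cancel hij)
      have hi' := mem_range.1 (mem_coe.1 hi)
      have hj' := mem_range.1 (mem_coe.1 hj)
      have : (i : ℤ) = j := intCast_inj_of_lt (p := p) (by omega) (by omega) (by simpa using h)
      omega

/-! ### Exponential sums and doubling -/

/-- The exponential sum of `B` at frequency `d`. -/
noncomputable def expSum {p : ℕ} [NeZero p] (B : Finset (ZMod p)) (d : ZMod p) : ℂ :=
  ∑ b ∈ B, ZMod.stdAddChar (d * b)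

lemma sum_stdAddChar {p : ℕ} [NeZero p] (x : ZMod p) :
    ∑ d : ZMod p, (ZMod.stdAddChar (d * x) : ℂ) = if x = 0 then (p : ℂ) else 0 := by
  have := AddChar.sum_mulShift x (ZMod.isPrimitive_stdAddChar p)
  rw [ZMod.card] at this
  rw [this]; split_ifs <;> simp

/-- Parseval's identity. -/
lemma sum_norm_sq_expSum {p : ℕ} [NeZero p] (B : Finset (ZMod p)) :
    ∑ d : ZMod p, ‖expSum B d‖ ^ 2 = p * B.card := by
  have h : ∀ d : ZMod p, ((‖expSum B d‖ ^ 2 : ℝ) : ℂ)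
      = ∑ b ∈ B, ∑ c ∈ B, ZMod.stdAddChar (d * (b - c)) := by
    intro d
    rw [Complex.ofReal_pow, ← Complex.mul_conj', expSum, map_sum, sum_mul_sum]
    refine sum_congr rfl fun b _ => sum_congr rfl fun c _ => ?_
    rw [← AddChar.map_neg_eq_conj, ← AddChar.map_add_eq_mul]
    congr 1; ring
  have : ((∑ d : ZMod p, ‖expSum B d‖ ^ 2 : ℝ) : ℂ) = ((p * B.card : ℝ) : ℂ) := by
    rw [Complex.ofReal_sum]
    simp_rw [h]
    rw [sum_comm]
    have : ∀ b ∈ B, ∑ d : ZMod p, ∑ c ∈ B, (ZMod.stdAddChar (d * (b - c)) : ℂ) = p := by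
      intro b hb
      rw [sum_comm]
      simp_rw [sum_stdAddChar, sub_eq_zero]
      rw [sum_ite_eq, if_pos hb]
    rw [sum_congr rfl this]
    simp [mul_comm]
  exact_mod_cast this

/-- The sum counts, with weight `p`, the solutions of `a + a' = b` with `a, a' ∈ A` and `b ∈ A + A`. -/
lemma sum_expSum_cube {p : ℕ} [NeZero p] (A : Finset (ZMod p)) :
    ∑ d : ZMod p, expSum A d * expSum A d * (starRingEnd ℂ) (expSum (A + A) d)
      = p * (A.card : ℂ) ^ 2 := by
  have h : ∀ d : ZMod p, expSum A d * expSum A d * (starRingEnd ℂ) (expSum (A + A) d)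
      = ∑ a ∈ A, ∑ a' ∈ A, ∑ b ∈ A + A, ZMod.stdAddChar (d * (a + a' - b)) := by
    intro d
    rw [expSum, expSum, map_sum, sum_mul_sum, sum_mul]
    refine sum_congr rfl fun a _ => ?_
    rw [sum_mul]
    refine sum_congr rfl fun a' _ => ?_
    rw [mul_sum]
    refine sum_congr rfl fun b _ => ?_
    rw [← AddChar.map_neg_eq_conj, ← AddChar.map_add_eq_mul, ← AddChar.map_add_eq_mul]
    congr 1; ring
  simp_rw [h]
  rw [sum_comm]
  have : ∀ a ∈ A, ∑ d : ZMod p, ∑ a' ∈ A, ∑ b ∈ A + A, (ZMod.stdAddChar (d * (a + a' - b)) : ℂ)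
      = A.card * p := by
    intro a ha
    rw [sum_comm]
    have : ∀ a' ∈ A, ∑ d : ZMod p, ∑ b ∈ A + A, (ZMod.stdAddChar (d * (a + a' - b)) : ℂ) = p := by
      intro a' ha'
      rw [sum_comm]
      simp_rw [sum_stdAddChar, sub_eq_zero]
      rw [sum_ite_eq, if_pos (add_mem_add ha ha')]
    rw [sum_congr rfl this]
    simp
  rw [sum_congr rfl this]
  simp; ring

lemma expSum_zero {p : ℕ} [NeZero p] (B : Finset (ZMod p)) : expSum B 0 = B.card := by
  simp [expSum]

/-- A set of small doubling has a large nontrivial exponential sum: in `sum_expSum_cube` one factor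
`expSum A d` is bounded by `M` and Cauchy–Schwarz and Parseval are applied to the rest. -/
lemma sq_card_le_of_expSum_le {p : ℕ} [NeZero p] (A : Finset (ZMod p)) (M : ℝ)
    (hM0 : 0 ≤ M) (hM : ∀ d : ZMod p, d ≠ 0 → ‖expSum A d‖ ≤ M)
    (hkm : A.card + (A + A).card ≤ p) (hk : A.card ≤ (A + A).card) (hm : (A + A).card < p) :
    (A.card : ℝ) ^ 2 ≤ M * (A + A).card := by
  set k : ℝ := (A.card : ℝ) with hkdef
  set m : ℝ := ((A + A).card : ℝ) with hmdef
  have hkm' : k + m ≤ p := by rw [hkdef, hmdef]; exact_mod_cast hkm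
  have hk' : k ≤ m := by rw [hkdef, hmdef]; exact_mod_cast hk
  have hm' : m < p := by rw [hmdef]; exact_mod_cast hm
  have hk0 : 0 ≤ k := by positivity
  have hm0 : 0 ≤ m := by positivity
  have eA : ∑ d ∈ univ.erase (0 : ZMod p), ‖expSum A d‖ ^ 2 = k * (p - k) := by
    have := sum_norm_sq_expSum A
    rw [← add_sum_erase _ _ (mem_univ (0 : ZMod p)), expSum_zero, Complex.norm_natCast] at this
    linarith
  have eAA : ∑ d ∈ univ.erase (0 : ZMod p), ‖expSum (A + A) d‖ ^ 2 = m * (p - m) := by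
    have := sum_norm_sq_expSum (A + A)
    rw [← add_sum_erase _ _ (mem_univ (0 : ZMod p)), expSum_zero, Complex.norm_natCast] at this
    linarith
  have e3 : ∑ d ∈ univ.erase (0 : ZMod p),
      expSum A d * expSum A d * (starRingEnd ℂ) (expSum (A + A) d)
        = ((k ^ 2 * (p - m) : ℝ) : ℂ) := by
    have := sum_expSum_cube A
    rw [← add_sum_erase _ _ (mem_univ (0 : ZMod p)), expSum_zero, expSum_zero] at this
    rw [← eq_sub_iff_add_eq'] at this
    rw [this]
    simp only [hkdef, hmdef, Complex.conj_natCast]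
    push_cast; ring
  have hcs : ∑ d ∈ univ.erase (0 : ZMod p), ‖expSum A d‖ * ‖expSum (A + A) d‖ ≤ m * (p - m) := by
    have h1 := sum_mul_sq_le_sq_mul_sq (univ.erase (0 : ZMod p)) (fun d => ‖expSum A d‖)
      (fun d => ‖expSum (A + A) d‖)
    rw [eA, eAA] at h1
    -- the difference of the two sides is `(m - k) * (p - k - m)`
    have h2 : k * (p - k) ≤ m * (p - m) := by nlinarith
    apply le_of_sq_le_sq _ (by nlinarith)
    refine h1.trans ?_
    rw [sq]
    exact mul_le_mul_of_nonneg_right h2 (by nlinarith)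
  have h4 : k ^ 2 * (p - m) ≤ M * (m * (p - m)) := by
    calc k ^ 2 * (p - m) = ‖((k ^ 2 * (p - m) : ℝ) : ℂ)‖ := by
          rw [Complex.norm_real, Real.norm_of_nonneg]
          exact mul_nonneg (by positivity) (by linarith)
      _ ≤ ∑ d ∈ univ.erase (0 : ZMod p), M * (‖expSum A d‖ * ‖expSum (A + A) d‖) := by
          rw [← e3]
          refine (norm_sum_le _ _).trans (sum_le_sum fun d hd => ?_)
          rw [norm_mul, norm_mul, RCLike.norm_conj, mul_assoc]
          exact mul_le_mul_of_nonneg_right (hM d (ne_of_mem_erase hd)) (by positivity)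
      _ ≤ _ := by
          rw [← mul_sum]
          exact mul_le_mul_of_nonneg_left hcs hM0
  rw [← mul_assoc] at h4
  exact le_of_mul_le_mul_right h4 (by linarith)

/-! ### Sums of cosines over points on a circle -/

/-- The sum of cosines along an arithmetic progression, in closed form. -/
lemma sum_cos_arith (b c : ℝ) (s : ℕ) :
    (∑ i ∈ range s, Real.cos (b + 2 * c * i)) * Real.sin c
      = Real.cos (b + c * (s - 1)) * Real.sin (c * s) := by
  have h1 : ∀ x y : ℝ, Real.cos x * Real.sin y = (Real.sin (x + y) - Real.sin (x - y)) / 2 := by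
    intro x y; rw [Real.sin_add, Real.sin_sub]; ring
  have h2 : ∀ i : ℕ, Real.cos (b + 2 * c * i) * Real.sin c
      = Real.sin (b - c + 2 * c * ((i + 1 : ℕ) : ℝ)) / 2 - Real.sin (b - c + 2 * c * (i : ℝ)) / 2 := by
    intro i
    rw [h1]
    have e1 : b + 2 * c * i + c = b - c + 2 * c * ((i + 1 : ℕ) : ℝ) := by push_cast; ring
    have e2 : b + 2 * c * i - c = b - c + 2 * c * (i : ℝ) := by ring
    rw [e1, e2]; ring
  rw [sum_mul, sum_congr rfl fun i _ => h2 i,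
    sum_range_sub (fun i : ℕ => Real.sin (b - c + 2 * c * (i : ℝ)) / 2), h1]
  have e1 : b + c * (s - 1) + c * s = b - c + 2 * c * (s : ℝ) := by ring
  have e2 : b + c * (s - 1) - c * s = b - c + 2 * c * ((0 : ℕ) : ℝ) := by push_cast; ring
  rw [e1, e2]; ring

/-- Among `s` distinct residues, the projection to any direction is largest for consecutive ones. -/
lemma sum_cos_le (p : ℕ) (hp : 2 ≤ p) (θ : ℝ) (T : Finset ℤ) (s : ℕ) (hs : T.card = s)
    (hsp : s ≤ p) (hT : ∀ x ∈ T, ∀ y ∈ T, (p : ℤ) ∣ x - y → x = y) :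
    ∑ j ∈ T, Real.cos (2 * (Real.pi / p) * j - θ)
      ≤ Real.sin (s * (Real.pi / p)) / Real.sin (Real.pi / p) := by
  rcases Nat.eq_zero_or_pos s with hs0 | hs0
  · rw [hs0] at hs ⊢
    rw [card_eq_zero.1 hs]; simp
  have hs1 : (1 : ℝ) ≤ s := by exact_mod_cast hs0
  set c := Real.pi / p with hc
  have hp0 : (0 : ℝ) < p := by positivity
  have hp2 : (2 : ℝ) ≤ p := by exact_mod_cast hp
  have hc0 : 0 < c := div_pos Real.pi_pos hp0
  have hcp : c * p = Real.pi := div_mul_cancel₀ _ hp0.ne'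
  have hcpi : c < Real.pi := by nlinarith
  have hsin : 0 < Real.sin c := Real.sin_pos_of_pos_of_lt_pi hc0 hcpi
  have hsR : (s : ℝ) ≤ p := by exact_mod_cast hsp
  have hscpi : s * c ≤ Real.pi := by rw [← hcp, mul_comm]; exact mul_le_mul_of_nonneg_left hsR hc0.le
  have hsins : 0 ≤ Real.sin (s * c) := Real.sin_nonneg_of_nonneg_of_le_pi (by positivity) hscpi
  -- the consecutive residues `a, …, a + s - 1`, centred as close to `θ` as possible
  set a : ℤ := round ((θ / c - s + 1) / 2) with ha
  set γ := 2 * c * a + c * (s - 1) - θ with hγ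
  have hγc : |γ| ≤ c := by
    have h := abs_sub_round ((θ / c - s + 1) / 2)
    rw [← ha] at h
    have e : γ = -(2 * c) * ((θ / c - s + 1) / 2 - a) := by
      rw [hγ]; field_simp; ring
    rw [e, abs_mul, abs_neg, abs_of_pos (by positivity : 0 < 2 * c)]
    nlinarith
  set f : ℤ → ℝ := fun j => Real.cos (2 * c * j - θ) with hf
  set ρ := |γ| + c * (s - 1) with hρ
  -- the values of `f` at these residues are at least `cos ρ`, all others at most `cos ρ`
  have hin : ∀ j : ℤ, a ≤ j → j < a + s → Real.cos ρ ≤ f j := by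
    intro j h1 h2
    have h1' : (a : ℝ) ≤ j := by exact_mod_cast h1
    have h2' : (j : ℝ) ≤ a + s - 1 := by
      have : j ≤ a + s - 1 := by omega
      exact_mod_cast this
    have hb : |2 * c * j - θ| ≤ ρ := by
      have := neg_abs_le γ
      have := le_abs_self γ
      rw [abs_le]; constructor <;> nlinarith
    rw [hf]; simp only
    rw [← Real.cos_abs (2 * c * j - θ)]
    exact Real.cos_le_cos_of_nonneg_of_le_pi (abs_nonneg _) (by nlinarith) hb
  have hout : ∀ j : ℤ, a + s ≤ j → j < a + p → f j ≤ Real.cos ρ := by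
    intro j h1 h2
    have h1' : (a : ℝ) + s ≤ j := by exact_mod_cast h1
    have h2' : (j : ℝ) ≤ a + p - 1 := by
      have : j ≤ a + p - 1 := by omega
      exact_mod_cast this
    have hsp1 : (s : ℝ) + 1 ≤ p := by
      have : (s : ℤ) + 1 ≤ p := by omega
      exact_mod_cast this
    have := neg_abs_le γ
    have := le_abs_self γ
    have hb1 : ρ ≤ 2 * c * j - θ := by nlinarith
    have hb2 : 2 * c * j - θ ≤ 2 * Real.pi - ρ := by nlinarith
    rw [hf]; simp only
    have hρ0 : 0 ≤ ρ := by have := abs_nonneg γ; nlinarith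
    rcases le_total (2 * c * j - θ) Real.pi with h | h
    · exact Real.cos_le_cos_of_nonneg_of_le_pi hρ0 h hb1
    · rw [← Real.cos_two_pi_sub]
      exact Real.cos_le_cos_of_nonneg_of_le_pi hρ0 (by linarith) (by linarith)
  set R : ℤ → ℤ := fun x => a + (x - a) % p with hR
  have hR1 : ∀ x, a ≤ R x ∧ R x < a + p := by
    intro x
    have h1 := Int.emod_nonneg (x - a) (by omega : (p : ℤ) ≠ 0)
    have h2 := Int.emod_lt_of_pos (x - a) (by omega : 0 < (p : ℤ))
    simp only [hR]; omega
  have hRx : ∀ x, x - R x = p * ((x - a) / p) := by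
    intro x
    have := Int.emod_add_mul_ediv (x - a) p
    simp only [hR]; linarith
  have hRf : ∀ x, f (R x) = f x := by
    intro x
    have h : (x : ℝ) = R x + p * (((x - a) / p : ℤ) : ℝ) := by
      have := hRx x
      have h2 : x = R x + p * ((x - a) / p) := by linarith
      exact_mod_cast h2
    have e : 2 * c * (x : ℝ) - θ = 2 * c * (R x : ℝ) - θ + (((x - a) / p : ℤ) : ℝ) * (2 * Real.pi) := by
      rw [h, ← hcp]; ring
    simp only [hf]
    rw [e, Real.cos_add_int_mul_two_pi]
  have hRinj : Set.InjOn R T := by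
    intro x hx y hy hxy
    apply hT x hx y hy
    have h1 := hRx x
    have h2 := hRx y
    rw [← hxy] at h2
    exact ⟨(x - a) / p - (y - a) / p, by rw [mul_sub]; linarith⟩
  have hJ : ∑ j ∈ Ico a (a + s), f j = ∑ i ∈ range s, Real.cos ((2 * c * a - θ) + 2 * c * i) := by
    symm
    apply sum_bij (fun (i : ℕ) _ => a + (i : ℤ))
    · intro i hi; have := mem_range.1 hi; rw [mem_Ico]; omega
    · intro i _ j _ h; simpa using h
    · intro j hj
      have := mem_Ico.1 hj
      exact ⟨(j - a).toNat, mem_range.2 (by omega), by omega⟩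
    · intro i _
      simp only [hf]; congr 1; push_cast; ring
  have hJ' : ∑ j ∈ Ico a (a + s), f j ≤ Real.sin (s * c) / Real.sin c := by
    rw [le_div_iff₀ hsin, hJ, sum_cos_arith, mul_comm c s]
    exact mul_le_of_le_one_left hsins (Real.cos_le_one _)
  have hJc : (Ico a (a + s)).card = s := by simp
  have hTc : (T.image R).card = s := by rw [card_image_of_injOn hRinj, hs]
  have hmain : ∑ j ∈ T.image R, (f j - Real.cos ρ) ≤ ∑ j ∈ Ico a (a + s), (f j - Real.cos ρ) := by
    rw [← sum_sdiff (inter_subset_left (s₁ := T.image R) (s₂ := Ico a (a + s))),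
      ← sum_sdiff (inter_subset_right (s₁ := T.image R) (s₂ := Ico a (a + s)))]
    gcongr ?_ + _
    apply le_trans (sum_nonpos _) (sum_nonneg _)
    · intro j hj
      simp only [mem_sdiff, mem_inter, not_and] at hj
      obtain ⟨x, -, rfl⟩ := mem_image.1 hj.1
      have h := hj.2 hj.1
      have := hR1 x
      rw [mem_Ico] at h
      exact sub_nonpos.2 (hout _ (by omega) (by omega))
    · intro j hj
      have := mem_Ico.1 (mem_sdiff.1 hj).1
      exact sub_nonneg.2 (hin _ (by omega) (by omega))
  rw [sum_sub_distrib, sum_sub_distrib, sum_const, sum_const, hTc, hJc, sum_image hRinj] at hmain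
  calc ∑ j ∈ T, f j = ∑ j ∈ T, f (R j) := by simp_rw [hRf]
    _ ≤ ∑ j ∈ Ico a (a + s), f j := by linarith
    _ ≤ _ := hJ'

/-- An enumeration of `B` along which `φ` is nondecreasing. -/
lemma exists_sorted_enum (B : Finset ℤ) (φ : ℤ → ℝ) :
    ∃ f : ℕ → ℤ, (range B.card).image f = B ∧ Set.InjOn f (range B.card) ∧
      ∀ i j, i ≤ j → j < B.card → φ (f i) ≤ φ (f j) := by
  set e : Fin B.card → ℤ := fun i => (B.equivFin.symm i : ℤ) with he
  have heinj : Function.Injective e := fun i j h => by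
    simpa using B.equivFin.symm.injective (Subtype.ext h)
  set σ := Tuple.sort (φ ∘ e)
  have hmono : Monotone ((φ ∘ e) ∘ σ) := Tuple.monotone_sort _
  set f : ℕ → ℤ := fun i => if h : i < B.card then e (σ ⟨i, h⟩) else 0 with hf
  have hfi : ∀ i (h : i < B.card), f i = e (σ ⟨i, h⟩) := fun i h => dif_pos h
  have hinj : Set.InjOn f (range B.card) := by
    intro i hi j hj h
    have hi' := mem_range.1 (mem_coe.1 hi)
    have hj' := mem_range.1 (mem_coe.1 hj)
    rw [hfi i hi', hfi j hj'] at h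
    simpa using σ.injective (heinj h)
  refine ⟨f, ?_, hinj, ?_⟩
  · apply eq_of_subset_of_card_le
    · intro x hx
      obtain ⟨i, hi, rfl⟩ := mem_image.1 hx
      rw [hfi i (mem_range.1 hi)]
      exact (B.equivFin.symm _).2
    · rw [card_image_of_injOn hinj, card_range]
  · intro i j hij hj
    rw [hfi i (by omega), hfi j hj]
    exact hmono (by simpa using hij)

lemma cos_add_cos_nonpos {x y : ℝ} (hy : y ≤ Real.pi) (h : Real.pi ≤ x + y)
    (hx' : x ≤ Real.pi) : Real.cos x + Real.cos y ≤ 0 := by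
  have := Real.cos_le_cos_of_nonneg_of_le_pi (x := Real.pi - x) (by linarith) hy (by linarith)
  rw [Real.cos_pi_sub] at this
  linarith

/-- If no half circle contains more than `n` points of `B`, then the arcs of half-lengths `v` and
`π - v` around the direction `θ` contain at most `2 n` points in total: the two arcs cover every point
as often as two suitable half circles do. -/
lemma card_arcs_le (p n : ℕ) (hp : 2 ≤ p) (hodd : Odd p) (θ : ℝ) (B : Finset ℤ)
    (hW : ∀ W : Finset ℤ, ∀ t : ℤ, W ⊆ B → W ⊆ Icc t (t + (p - 1) / 2) → W.card ≤ n)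
    (v : ℝ) (hv0 : 0 ≤ v) (hv : v ≤ Real.pi) :
    (B.filter (fun j : ℤ => |2 * (Real.pi / p) * j - θ| ≤ v)).card
      + (B.filter (fun j : ℤ => |2 * (Real.pi / p) * j - θ| ≤ Real.pi - v)).card ≤ 2 * n := by
  set c := Real.pi / p with hc
  have hp0 : (0 : ℝ) < p := by positivity
  have hc0 : 0 < c := div_pos Real.pi_pos hp0
  have hcp : c * p = Real.pi := div_mul_cancel₀ _ hp0.ne'
  obtain ⟨q, hq⟩ := hodd
  have half : ∀ w : ℝ, (B.filter (fun j : ℤ => -w ≤ 2 * c * j - θ ∧ 2 * c * j - θ ≤ Real.pi - w)).card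
      ≤ n := by
    intro w
    apply hW _ ⌈(θ - w) / (2 * c)⌉ (filter_subset _ _)
    intro j hj
    obtain ⟨-, h1, h2⟩ := mem_filter.1 hj
    have ht : ⌈(θ - w) / (2 * c)⌉ ≤ j := by
      rw [Int.ceil_le, div_le_iff₀ (by positivity)]; linarith
    have h3 := Int.le_ceil ((θ - w) / (2 * c))
    rw [div_le_iff₀ (by positivity)] at h3
    have h4 : 2 * (j : ℝ) ≤ 2 * (⌈(θ - w) / (2 * c)⌉ : ℝ) + p := by
      apply le_of_mul_le_mul_left _ hc0
      nlinarith
    have h5 : 2 * j ≤ 2 * ⌈(θ - w) / (2 * c)⌉ + p := by exact_mod_cast h4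
    rw [mem_Icc]
    omega
  have h1 := half v
  have h2 := half (Real.pi - v)
  rw [two_mul n]
  refine le_trans ?_ (add_le_add h1 h2)
  simp only [card_filter]
  rw [← sum_add_distrib, ← sum_add_distrib]
  apply sum_le_sum
  intro j _
  simp only [abs_le]
  generalize 2 * c * (j : ℝ) - θ = x
  by_cases hx : 0 ≤ x
  · by_cases h3 : x ≤ v <;> by_cases h4 : x ≤ Real.pi - v <;>
    simp [h3, h4, show -v ≤ x by linarith, show v - Real.pi ≤ x by linarith]
  · by_cases h3 : -v ≤ x <;> by_cases h4 : v - Real.pi ≤ x <;>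
    simp [h3, h4, show x ≤ v by linarith, show x ≤ Real.pi - v by linarith]

/-- If no half circle contains more than `n` of the points of `B`, then the sum of the
projections to any direction is at most that of `2 n - |B|` consecutive points: with the points sorted
by distance from the direction, the last `2 (|B| - n)` pair off, first with last, into pairs of
nonpositive contribution. -/
lemma sum_cos_le_of_half (p n : ℕ) (hp : 2 ≤ p) (hodd : Odd p) (θ : ℝ) (B : Finset ℤ)
    (hW : ∀ W : Finset ℤ, ∀ t : ℤ, W ⊆ B → W ⊆ Icc t (t + (p - 1) / 2) → W.card ≤ n)
    (hB : ∀ x ∈ B, ∀ y ∈ B, (p : ℤ) ∣ x - y → x = y) (hBp : B.card ≤ p)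
    (hBθ : ∀ j ∈ B, |2 * (Real.pi / p) * j - θ| ≤ Real.pi)
    (hkn : B.card ≤ 2 * n) (hnk : n ≤ B.card) :
    ∑ j ∈ B, Real.cos (2 * (Real.pi / p) * j - θ)
      ≤ Real.sin ((2 * n - B.card : ℕ) * (Real.pi / p)) / Real.sin (Real.pi / p) := by
  set c := Real.pi / p with hc
  obtain ⟨f, hfB, hfinj, hfmono⟩ := exists_sorted_enum B (fun j => |2 * c * j - θ|)
  set k := B.card with hk
  set φ : ℕ → ℝ := fun i => |2 * c * (f i : ℝ) - θ| with hφ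
  have hmemB : ∀ i < k, f i ∈ B := fun i hi => by
    rw [← hfB]; exact mem_image_of_mem _ (mem_range.2 hi)
  -- if `φ i + φ j < π`, the arcs of half-lengths `φ i` and `π - φ i` hold `2 n + 1` points
  have hpair : ∀ i j, i ≤ j → j < k → 2 * n ≤ i + j + 1 → Real.pi ≤ φ i + φ j := by
    intro i j hij hj hn
    by_contra hlt
    push Not at hlt
    have key : ∀ i < k, ∀ v, φ i ≤ v →
        i + 1 ≤ (B.filter (fun j : ℤ => |2 * c * j - θ| ≤ v)).card := by
      intro i hi v hv
      rw [← card_range (i + 1), ← card_image_of_injOn (s := range (i + 1)) (f := f)]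
      · apply card_le_card
        intro x hx
        obtain ⟨l, hl, rfl⟩ := mem_image.1 hx
        have hl' := mem_range.1 hl
        exact mem_filter.2 ⟨hmemB l (by omega), (hfmono l i (by omega) hi).trans hv⟩
      · apply hfinj.mono
        intro l hl
        have := mem_range.1 (mem_coe.1 hl)
        exact mem_coe.2 (mem_range.2 (by omega))
    have h1 := key i (by omega) (φ i) le_rfl
    have h2 := key j hj (Real.pi - φ i) (by linarith)
    have h3 := card_arcs_le p n hp hodd θ B hW (φ i) (abs_nonneg _) (hBθ _ (hmemB i (by omega)))
    rw [← hc] at h3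
    omega
  have hsum : ∑ j ∈ B, Real.cos (2 * c * j - θ) = ∑ i ∈ range k, Real.cos (2 * c * (f i : ℝ) - θ) := by
    conv_lhs => rw [← hfB]
    rw [sum_image hfinj]
  have hcosφ : ∀ i, Real.cos (2 * c * (f i : ℝ) - θ) = Real.cos (φ i) :=
    fun i => (Real.cos_abs _).symm
  set s := 2 * n - k with hs
  have hsk : k = s + 2 * (k - n) := by omega
  have htail : ∑ i ∈ range (2 * (k - n)), Real.cos (φ (s + i)) ≤ 0 := by
    have h1 := sum_range_reflect (fun i => Real.cos (φ (s + i))) (2 * (k - n))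
    have h2 : ∑ i ∈ range (2 * (k - n)),
        (Real.cos (φ (s + i)) + Real.cos (φ (s + (2 * (k - n) - 1 - i)))) ≤ 0 := by
      apply sum_nonpos
      intro i hi
      have hi' := mem_range.1 hi
      have a1 : φ (s + i) ≤ Real.pi := hBθ _ (hmemB _ (by omega))
      have a2 : φ (s + (2 * (k - n) - 1 - i)) ≤ Real.pi := hBθ _ (hmemB _ (by omega))
      apply cos_add_cos_nonpos a2 _ a1
      rcases le_total (s + i) (s + (2 * (k - n) - 1 - i)) with h | h
      · exact hpair _ _ h (by omega) (by omega)
      · rw [add_comm]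
        exact hpair _ _ h (by omega) (by omega)
    rw [sum_add_distrib] at h2
    linarith
  have hhead : ∑ i ∈ range s, Real.cos (2 * c * (f i : ℝ) - θ)
      ≤ Real.sin (s * c) / Real.sin c := by
    have hsub : ∀ i ∈ range s, i < k := fun i hi => by have := mem_range.1 hi; omega
    have hinj' : Set.InjOn f (range s) :=
      hfinj.mono fun i hi => mem_coe.2 (mem_range.2 (hsub i (mem_coe.1 hi)))
    have := sum_cos_le p hp θ ((range s).image f) s
      (by rw [card_image_of_injOn hinj', card_range]) (by omega)
      (by
        intro x hx y hy
        obtain ⟨i, hi, rfl⟩ := mem_image.1 hx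
        obtain ⟨j, hj, rfl⟩ := mem_image.1 hy
        exact hB _ (hmemB i (hsub i hi)) _ (hmemB j (hsub j hj)))
    rwa [sum_image hinj'] at this
  rw [hsum, hsk, sum_range_add]
  have : ∑ x ∈ range (2 * (k - n)), Real.cos (2 * c * (f (s + x) : ℝ) - θ)
      = ∑ i ∈ range (2 * (k - n)), Real.cos (φ (s + i)) := sum_congr rfl fun i _ => hcosφ _
  linarith

/-! ### The Fourier bound against the doubling hypothesis -/

/-- If no half circle contains more than `n` points of the dilate of `A` by `d`, the exponential sum
of `A` at `d` is at most that of `2 n - |A|` consecutive residues. -/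
lemma norm_expSum_le {p : ℕ} [Fact p.Prime] (hodd : Odd p) (A : Finset (ZMod p)) (n : ℕ)
    (d : ZMod p) (hd : d ≠ 0)
    (hW : ∀ W : Finset ℤ, ∀ t : ℤ, W ⊆ Icc t (t + (p - 1) / 2) →
      (∀ w ∈ W, d⁻¹ * (w : ZMod p) ∈ A) → W.card ≤ n)
    (hkn : A.card ≤ 2 * n) (hnk : n ≤ A.card) :
    ‖expSum A d‖ ≤ Real.sin ((2 * n - A.card : ℕ) * (Real.pi / p)) / Real.sin (Real.pi / p) := by
  have hp := (Fact.out : p.Prime).two_le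
  have hp0 : (0 : ℝ) < p := by positivity
  have hpi := Real.pi_pos
  have hAp : A.card ≤ p := by
    have := card_le_univ A
    rwa [ZMod.card] at this
  set θ := (expSum A d).arg with hθ
  -- residues are represented so that their angles lie within `π` of `θ`
  set s : ℤ := ⌈(θ - Real.pi) / (2 * (Real.pi / p))⌉ with hs
  set B : Finset ℤ := (Ico s (s + p)).filter (fun j => d⁻¹ * (j : ZMod p) ∈ A) with hBdef
  have hBs : ∀ j ∈ B, s ≤ j ∧ j < s + p := fun j hj => mem_Ico.1 (mem_filter.1 hj).1
  have hinj : Set.InjOn (fun j : ℤ => d⁻¹ * (j : ZMod p)) B := by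
    intro x hx y hy h
    have h1 := hBs x hx
    have h2 := hBs y hy
    exact intCast_inj_of_lt (by omega) (by omega) (mul_left_cancel₀ (inv_ne_zero hd) h)
  have himg : B.image (fun j : ℤ => d⁻¹ * (j : ZMod p)) = A := by
    ext a
    rw [mem_image]
    constructor
    · rintro ⟨j, hj, rfl⟩; exact (mem_filter.1 hj).2
    · intro ha
      obtain ⟨t, ht0, htp, ht⟩ := exists_int_rep (d * a - (s : ZMod p))
      have e : d⁻¹ * ((s + t : ℤ) : ZMod p) = a := by
        push_cast
        rw [ht, add_sub_cancel, inv_mul_cancel_left₀ hd]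
      exact ⟨s + t, mem_filter.2 ⟨mem_Ico.2 (by omega), by rw [e]; exact ha⟩, e⟩
  have hBc : B.card = A.card := by rw [← himg, card_image_of_injOn hinj]
  have hnorm : ‖expSum A d‖ = ∑ j ∈ B, Real.cos (2 * (Real.pi / p) * j - θ) := by
    have h1 : ((‖expSum A d‖ : ℝ) : ℂ) = Complex.exp (-(θ * Complex.I)) * expSum A d := by
      conv_rhs => rw [← Complex.norm_mul_exp_arg_mul_I (expSum A d)]
      rw [← hθ, mul_left_comm, ← Complex.exp_add]
      simp
    have h2 : expSum A d = ∑ j ∈ B, Complex.exp (2 * Real.pi * Complex.I * j / p) := by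
      rw [expSum]
      conv_lhs => rw [← himg]
      rw [sum_image hinj]
      refine sum_congr rfl fun j _ => ?_
      rw [mul_inv_cancel_left₀ hd, ZMod.stdAddChar_coe]
    have h3 : ((‖expSum A d‖ : ℝ) : ℂ).re = ∑ j ∈ B, Real.cos (2 * (Real.pi / p) * j - θ) := by
      rw [h1, h2, mul_sum, Complex.re_sum]
      refine sum_congr rfl fun j _ => ?_
      rw [← Complex.exp_add, ← Complex.exp_ofReal_mul_I_re]
      congr 2
      push_cast; ring
    simpa using h3
  rw [hnorm, ← hBc]
  apply sum_cos_le_of_half p n hp hodd θ B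
  · intro W t hWB hWt
    exact hW W t hWt fun w hw => (mem_filter.1 (hWB hw)).2
  · intro x hx y hy hxy
    have h1 := hBs x hx
    have h2 := hBs y hy
    have := Int.eq_zero_of_abs_lt_dvd hxy (by rw [abs_lt]; omega)
    omega
  · omega
  · intro j hj
    obtain ⟨h1, h2⟩ := hBs j hj
    have h3 := Int.le_ceil ((θ - Real.pi) / (2 * (Real.pi / p)))
    have h4 := Int.ceil_lt_add_one ((θ - Real.pi) / (2 * (Real.pi / p)))
    rw [← hs] at h3 h4
    have h1' : (s : ℝ) ≤ j := by exact_mod_cast h1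
    have h2' : (j : ℝ) ≤ s + p - 1 := by
      have : j ≤ s + p - 1 := by omega
      exact_mod_cast this
    have hc0 : 0 < Real.pi / p := div_pos hpi hp0
    have hcp : Real.pi / p * p = Real.pi := div_mul_cancel₀ _ hp0.ne'
    have e := div_mul_cancel₀ (θ - Real.pi) (by positivity : 2 * (Real.pi / (p : ℝ)) ≠ 0)
    set c := Real.pi / (p : ℝ)
    set X := (θ - Real.pi) / (2 * c)
    rw [abs_le]
    constructor <;> nlinarith
  · omega
  · omega

/-- `sin x / x` is decreasing on `(0, π]`. -/
lemma mul_sin_le_mul_sin {x y : ℝ} (hx : 0 < x) (hxy : x ≤ y) (hy : y ≤ Real.pi) :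
    x * Real.sin y ≤ y * Real.sin x := by
  have hy0 : 0 < y := hx.trans_le hxy
  have := strictConcaveOn_sin_Icc.concaveOn.2
    (show (0 : ℝ) ∈ Set.Icc 0 Real.pi from ⟨le_rfl, Real.pi_pos.le⟩)
    (show y ∈ Set.Icc 0 Real.pi from ⟨hy0.le, hy⟩)
    (show 0 ≤ 1 - x / y by rw [sub_nonneg, div_le_one hy0]; exact hxy)
    (show 0 ≤ x / y by positivity) (by ring)
  simp only [smul_eq_mul, Real.sin_zero, mul_zero, zero_add, div_mul_cancel₀ _ hy0.ne'] at this
  rw [div_mul_eq_mul_div, div_le_iff₀ hy0] at this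
  linarith

/-- `α` is the larger root of a quadratic equation, and it is at most `1`. -/
lemma alpha_spec (p : ℕ) (hp : 2 ≤ p) (η : ℝ) (hη0 : 0 < η) (hη1 : η < 1) (α : ℝ)
    (hα : α = -5/4 + (1/4) * Real.sqrt (9 + 8 * η * p * Real.sin (Real.pi / p)
      / Real.sin (Real.pi * η / 3))) :
    (2 * α + 1) * (α + 2) * Real.sin (Real.pi * η / 3) = η * p * Real.sin (Real.pi / p) ∧
      α ≤ 1 := by
  have hpi := Real.pi_pos
  have hp0 : (0 : ℝ) < p := by positivity
  have hp2 : (2 : ℝ) ≤ p := by exact_mod_cast hp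
  have hx0 : 0 < Real.pi * η / 3 := by positivity
  have hxpi : Real.pi * η / 3 ≤ Real.pi / 2 := by nlinarith
  have hsin : 0 < Real.sin (Real.pi * η / 3) := Real.sin_pos_of_pos_of_lt_pi hx0 (by linarith)
  have hsin2 : 2 * η / 3 ≤ Real.sin (Real.pi * η / 3) := by
    have := Real.mul_le_sin hx0.le hxpi
    have e : 2 / Real.pi * (Real.pi * η / 3) = 2 * η / 3 := by field_simp
    rwa [e] at this
  have hc0 : 0 < Real.pi / p := by positivity
  have hcpi : Real.pi / p ≤ Real.pi := div_le_self hpi.le (by linarith)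
  have hsc0 : 0 ≤ Real.sin (Real.pi / p) := Real.sin_nonneg_of_nonneg_of_le_pi hc0.le hcpi
  have hsc : p * Real.sin (Real.pi / p) ≤ Real.pi := by
    have := Real.sin_le hc0.le
    calc p * Real.sin (Real.pi / p) ≤ p * (Real.pi / p) := mul_le_mul_of_nonneg_left this hp0.le
      _ = Real.pi := mul_div_cancel₀ _ hp0.ne'
  set S := Real.sin (Real.pi * η / 3)
  set c := Real.sin (Real.pi / p)
  set C := 8 * η * p * c / S with hC
  have hC0 : 0 ≤ C := by positivity
  have hCS : C * S = 8 * η * p * c := div_mul_cancel₀ _ hsin.ne'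
  have hC72 : C ≤ 72 := by
    rw [hC, div_le_iff₀ hsin]
    have := Real.pi_lt_four
    have h1 : η * (p * c) ≤ η * Real.pi := mul_le_mul_of_nonneg_left hsc hη0.le
    nlinarith
  have hsq : (4 * α + 5) ^ 2 = 9 + C := by
    rw [hα]
    have := Real.sq_sqrt (by linarith : 0 ≤ 9 + C)
    nlinarith
  have h5 : 0 ≤ 4 * α + 5 := by
    rw [hα]
    have := Real.sqrt_nonneg (9 + C)
    linarith
  constructor
  · have : 8 * ((2 * α + 1) * (α + 2)) = C := by nlinarith
    have : 8 * ((2 * α + 1) * (α + 2)) * S = 8 * η * p * c := by rw [this, hCS]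
    linarith
  · nlinarith

/-- The lower bound of `sq_card_le_of_expSum_le` is incompatible with the upper bound of
`norm_expSum_le` for `3 n ≤ m + 3`, by the quadratic equation for `α` and the monotonicity of
`sin x / x`. -/
lemma numeric_contra (p k m n : ℕ) (hp : 2 ≤ p) (hk : 1 ≤ k) (η α : ℝ) (hη0 : 0 < η)
    (hkη : η * p ≤ k) (hα0 : 0 ≤ α) (hα1 : α ≤ 1)
    (hα : (2 * α + 1) * (α + 2) * Real.sin (Real.pi * η / 3) = η * p * Real.sin (Real.pi / p))
    (hm : (m : ℝ) ≤ (2 + α) * k - 3) (hkp : 2 * k ≤ p) (hn : 3 * n ≤ m + 3) (hkn : k ≤ 2 * n) :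
    ¬ (k : ℝ) ^ 2 ≤ Real.sin ((2 * n - k : ℕ) * (Real.pi / p)) / Real.sin (Real.pi / p) * m := by
  intro h
  have hpi := Real.pi_pos
  have hp0 : (0 : ℝ) < p := by positivity
  have hp2 : (2 : ℝ) ≤ p := by exact_mod_cast hp
  have hk1 : (1 : ℝ) ≤ k := by exact_mod_cast hk
  have hkp' : 2 * (k : ℝ) ≤ p := by exact_mod_cast hkp
  have hn' : 3 * (n : ℝ) ≤ m + 3 := by exact_mod_cast hn
  have hcast : ((2 * n - k : ℕ) : ℝ) = 2 * n - k := by rw [Nat.cast_sub hkn]; push_cast; ring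
  have hs0 : (0 : ℝ) ≤ ((2 * n - k : ℕ) : ℝ) := by positivity
  set s : ℝ := ((2 * n - k : ℕ) : ℝ)
  set c := Real.pi / p with hc
  have hc0 : 0 < c := by positivity
  have hcp : c * p = Real.pi := div_mul_cancel₀ _ hp0.ne'
  have hcpi : c < Real.pi := by nlinarith
  have hsin : 0 < Real.sin c := Real.sin_pos_of_pos_of_lt_pi hc0 hcpi
  have hkc : k * c ≤ Real.pi / 2 := by
    have := mul_le_mul_of_nonneg_left hkp' hc0.le
    linarith
  set y := k * c / 3 with hy
  have hy0 : 0 < y := by positivity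
  have hypi : y ≤ Real.pi / 6 := by linarith
  have hs : s * c ≤ (1 + 2 * α) * y := by
    have : s ≤ (1 + 2 * α) * k / 3 := by rw [hcast]; linarith
    calc s * c ≤ (1 + 2 * α) * k / 3 * c := mul_le_mul_of_nonneg_right this hc0.le
      _ = _ := by rw [hy]; ring
  have hy3 : (1 + 2 * α) * y ≤ Real.pi / 2 := by
    have : (1 + 2 * α) * y ≤ 3 * y := mul_le_mul_of_nonneg_right (by linarith) hy0.le
    have e : 3 * y = k * c := by rw [hy]; ring
    linarith
  have h1 : Real.sin (s * c) ≤ Real.sin ((1 + 2 * α) * y) :=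
    Real.sin_le_sin_of_le_of_le_pi_div_two (by linarith [mul_nonneg hs0 hc0.le]) hy3 hs
  have h2 : Real.sin ((1 + 2 * α) * y) ≤ (1 + 2 * α) * Real.sin y := by
    have := mul_sin_le_mul_sin hy0 (le_mul_of_one_le_left hy0.le (by linarith) : y ≤ (1 + 2 * α) * y) (by linarith)
    have e : (1 + 2 * α) * y * Real.sin y = y * ((1 + 2 * α) * Real.sin y) := by ring
    rw [e] at this
    exact le_of_mul_le_mul_left this hy0
  have hsiny : 0 < Real.sin y := Real.sin_pos_of_pos_of_lt_pi hy0 (by linarith)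
  have h3 : (k : ℝ) ^ 2 * Real.sin c < (1 + 2 * α) * Real.sin y * ((2 + α) * k) := by
    rw [div_mul_eq_mul_div, le_div_iff₀ hsin] at h
    have hm0 : (0 : ℝ) ≤ m := by positivity
    calc (k : ℝ) ^ 2 * Real.sin c ≤ Real.sin (s * c) * m := h
      _ ≤ (1 + 2 * α) * Real.sin y * m := mul_le_mul_of_nonneg_right (h1.trans h2) hm0
      _ < _ := mul_lt_mul_of_pos_left (by linarith) (by positivity)
  have h4 : k * Real.sin c < (2 * α + 1) * (α + 2) * Real.sin y := by
    have : k * (k * Real.sin c) < k * ((2 * α + 1) * (α + 2) * Real.sin y) := by linarith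
    exact lt_of_mul_lt_mul_left this (by positivity)
  have hxy : Real.pi * η / 3 ≤ y := by
    rw [hy, ← hcp]
    have : η * p * c ≤ k * c := mul_le_mul_of_nonneg_right hkη hc0.le
    linarith
  have h5 := mul_sin_le_mul_sin (by positivity : 0 < Real.pi * η / 3) hxy (by linarith)
  have hx0 : 0 < Real.sin (Real.pi * η / 3) :=
    Real.sin_pos_of_pos_of_lt_pi (by positivity) (by linarith)
  set X := Real.sin (Real.pi * η / 3)
  have h6 : η * p * Real.sin y ≤ k * X := by
    have e1 : Real.pi * η / 3 * Real.sin y = c / 3 * (η * p * Real.sin y) := by rw [← hcp]; ring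
    have e2 : y * X = c / 3 * (k * X) := by rw [hy]; ring
    rw [e1, e2] at h5
    exact le_of_mul_le_mul_left h5 (by positivity)
  have h7 : k * Real.sin c * X < (2 * α + 1) * (α + 2) * Real.sin y * X :=
    mul_lt_mul_of_pos_right h4 hx0
  have h8 : (2 * α + 1) * (α + 2) * Real.sin y * X = η * p * Real.sin y * Real.sin c := by
    calc _ = (2 * α + 1) * (α + 2) * X * Real.sin y := by ring
      _ = _ := by rw [hα]; ring
  have h9 : η * p * Real.sin y * Real.sin c ≤ k * X * Real.sin c :=
    mul_le_mul_of_nonneg_right h6 hsin.le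
  linarith

theorem stmt2 (p : ℕ) (hp : p.Prime) (η : ℝ) (hη0 : 0 < η) (hη1 : η < 1)
    (A : Finset (ZMod p))
    (hAcard : (A.card : ℝ) ≥ η * p) (hηp : 0 < η * p)
    (r : ℤ) (hr : ((A + A).card : ℤ) = 2 * A.card + r)
    (h2Ap : (A + A).card < p)
    (α : ℝ)
    (hα : α = -5/4 + (1/4) * Real.sqrt (9 + 8 * η * p * Real.sin (Real.pi / p)
      / Real.sin (Real.pi * η / 3)))
    (h1 : ((A + A).card : ℝ) ≤ (2 + α) * A.card - 3)
    (h2 : (A.card : ℝ) ≤ ((p : ℝ) - r) / 3) :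
    ∃ g : ZMod p, g ≠ 0 ∧ ∃ PA P2A : Finset (ZMod p),
      IsAPWith g PA ∧ IsAPWith g P2A ∧
      A ⊆ PA ∧ (PA.card : ℤ) ≤ A.card + r + 1 ∧
      P2A ⊆ A + A ∧ 2 * (A.card : ℤ) - 1 ≤ (P2A.card : ℤ) := by
  have : Fact p.Prime := ⟨hp⟩
  obtain ⟨hα1, hα2⟩ := alpha_spec p hp.two_le η hη0 hη1 α hα
  have hk1 : 1 ≤ A.card := by
    have : (0 : ℝ) < A.card := by linarith
    exact_mod_cast this
  have hAne : A.Nonempty := card_pos.1 hk1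
  have hkm : A.card + (A + A).card ≤ p := by
    have h3 : 3 * (A.card : ℝ) + r ≤ p := by linarith
    have h4 : 3 * (A.card : ℤ) + r ≤ p := by exact_mod_cast h3
    omega
  have hcd : 2 * A.card ≤ (A + A).card + 1 := by
    have := ZMod.cauchy_davenport hp hAne hAne
    omega
  have hcdR : 2 * (A.card : ℝ) ≤ (A + A).card + 1 := by exact_mod_cast hcd
  have hkR : (1 : ℝ) ≤ A.card := by exact_mod_cast hk1
  have hα0 : 0 ≤ α := by nlinarith
  have hm3 : (A + A).card + 3 ≤ 3 * A.card := by
    have : ((A + A).card : ℝ) + 3 ≤ 3 * A.card := by nlinarith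
    exact_mod_cast this
  have hodd : Odd p := hp.odd_of_ne_two (by omega)
  -- Fourier analysis yields a half circle containing more than a third of `|A + A|` points
  by_cases hW : ∃ d : ZMod p, d ≠ 0 ∧ ∃ W : Finset ℤ, ∃ t : ℤ, W ⊆ Icc t (t + (p - 1) / 2) ∧
      (∀ w ∈ W, d⁻¹ * (w : ZMod p) ∈ A) ∧ (A + A).card + 4 ≤ 3 * W.card
  · obtain ⟨d, hd, W, t, hWt, hWA, hWc⟩ := hW
    obtain ⟨g, hg, PA, P2A, q1, q2, q3, q4, q5, q6⟩ := progressions_of_half A W d⁻¹ t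
      (inv_ne_zero hd) hWt hWA hWc hkm hk1 (by omega)
    exact ⟨g, hg, PA, P2A, q1, q2, q3, by omega, q5, q6⟩
  · exfalso
    push Not at hW
    set n := ((A + A).card + 3) / 3 with hn
    refine numeric_contra p A.card (A + A).card n hp.two_le hk1 η α hη0 hAcard hα0 hα2 hα1 h1
      (by omega) (by omega) (by omega) ?_
    have hM : ∀ d : ZMod p, d ≠ 0 → ‖expSum A d‖
        ≤ Real.sin ((2 * n - A.card : ℕ) * (Real.pi / p)) / Real.sin (Real.pi / p) := by
      intro d hd
      apply norm_expSum_le hodd A n d hd _ (by omega) (by omega)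
      intro W t hWt hWA
      have := hW d hd W t hWt hWA
      omega
    exact sq_card_le_of_expSum_le A _ ((norm_nonneg _).trans (hM 1 one_ne_zero)) hM hkm
      (by omega) h2Ap
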